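/- arXiv:2512.17706 — 9 statements merged into one kernel-verified Lean document; each statement's English description precedes it below -/
import Mathlib

section
/- For every θ ∈ [0, π/2] there exist positive semidefinite real symmetric 2×2 matrices C_1, C_2, C_3, C_4, C_5, C_6 such that C_1 − 2C_2 + C_3 + C_4 − 2C_5 + C_6 = diag(1,−2), C_1 + C_2 − 2C_3 + C_4 + C_5 − 2C_6 = diag(−2,1), C_1 + C_2 + C_3 − C_4 − C_5 − C_6 = X_3(θ), and C_1 + C_2 + C_3 + C_4 + C_5 + C_6 = (4/(1+√3))·I_2. -/
open Matrix

/-- The real symmetric 2×2 matrix `[[cos θ, sin θ],[sin θ, −cos θ]]`. -/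
noncomputable def X3 (θ : ℝ) : Matrix (Fin 2) (Fin 2) ℝ :=
  !![Real.cos θ, Real.sin θ; Real.sin θ, -Real.cos θ]

lemma psd_two (x y z : ℝ) (hx : 0 ≤ x) (hz : 0 ≤ z) (h : y ^ 2 ≤ x * z) :
    (!![x, y; y, z] : Matrix (Fin 2) (Fin 2) ℝ).PosSemidef := by
  refine Matrix.PosSemidef.of_dotProduct_mulVec_nonneg ?_ ?_
  · ext i j
    fin_cases i <;> fin_cases j <;> simp
  · intro v
    simp only [dotProduct, Matrix.mulVec, Fin.sum_univ_two, Pi.star_apply, star_trivial,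
      Matrix.of_apply, Matrix.cons_val_zero, Matrix.cons_val_one, Matrix.cons_val_fin_one]
    generalize v 0 = m
    generalize v 1 = n
    rcases hx.eq_or_lt with h0 | h0
    · subst h0
      have : y = 0 := by nlinarith [sq_nonneg y]
      subst this
      nlinarith [mul_nonneg hz (sq_nonneg n)]
    · have e : m * (x * m + y * n) + n * (y * m + z * n)
          = ((x * m + y * n) ^ 2 + (x * z - y ^ 2) * n ^ 2) / x := by
        field_simp
        ring
      rw [e]
      have := mul_nonneg (sub_nonneg.2 h) (sq_nonneg n)
      positivity

/-- For every `θ ∈ [0, π/2]` there exist positive semidefinite real symmetric 2×2 matrices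
`C_1, …, C_6` satisfying the four indicated linear matrix equations. -/
theorem stmt_2 (θ : ℝ) (hθ : θ ∈ Set.Icc (0 : ℝ) (Real.pi / 2)) :
    ∃ C : Fin 6 → Matrix (Fin 2) (Fin 2) ℝ,
      (∀ i, (C i).PosSemidef) ∧
      C 0 - (2 : ℝ) • C 1 + C 2 + C 3 - (2 : ℝ) • C 4 + C 5 = !![(1 : ℝ), 0; 0, -2] ∧
      C 0 + C 1 - (2 : ℝ) • C 2 + C 3 + C 4 - (2 : ℝ) • C 5 = !![(-2 : ℝ), 0; 0, 1] ∧
      C 0 + C 1 + C 2 - C 3 - C 4 - C 5 = X3 θ ∧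
      C 0 + C 1 + C 2 + C 3 + C 4 + C 5 =
        (4 / (1 + Real.sqrt 3)) • (1 : Matrix (Fin 2) (Fin 2) ℝ) := by
  obtain ⟨r, hr⟩ : ∃ r, r = Real.sqrt 3 := ⟨_, rfl⟩
  have hr2 : r ^ 2 = 3 := by rw [hr]; exact Real.sq_sqrt (by norm_num)
  have hr0 : 0 ≤ r := by rw [hr]; exact Real.sqrt_nonneg 3
  have hr1 : 3 / 2 ≤ r := by nlinarith
  have hr3 : r ≤ 2 := by nlinarith
  have hs : 4 / (1 + Real.sqrt 3) = 2 * r - 2 := by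
    rw [← hr, div_eq_iff (by positivity)]
    linarith
  rw [hs]
  unfold X3
  have hcs := Real.sin_sq_add_cos_sq θ
  generalize Real.sin θ = q at *
  generalize Real.cos θ = k at *
  obtain ⟨p, hp⟩ : ∃ p, p = k * ((r + 1) / 4) := ⟨_, rfl⟩
  have hk : k = (2 * r - 2) * p := by rw [hp]; linear_combination (-k / 2) * hr2
  have hpq : p ^ 2 + q ^ 2 ≤ 1 := by
    have : p ^ 2 ≤ k ^ 2 := by
      rw [hp, mul_pow]
      have : ((r + 1) / 4) ^ 2 ≤ 1 := by nlinarith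
      nlinarith [sq_nonneg k]
    linarith
  have hp1 : p ≤ 1 := by nlinarith [sq_nonneg q]
  have hp2 : -1 ≤ p := by nlinarith [sq_nonneg q]
  obtain ⟨a, ha⟩ : ∃ a, a = r / 3 - 1 / 2 := ⟨_, rfl⟩
  obtain ⟨b, hb⟩ : ∃ b, b = r / 3 := ⟨_, rfl⟩
  obtain ⟨c, hc⟩ : ∃ c, c = 1 / 2 - r / 6 := ⟨_, rfl⟩
  have ha0 : 0 ≤ a := by linarith
  have hb0 : 0 ≤ b := by linarith
  have hab : a * b = c ^ 2 := by rw [ha, hb, hc]; linear_combination (1 / 12) * hr2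
  have h1 : 0 ≤ 1 - p := by linarith
  have h2 : 0 ≤ 1 + p := by linarith
  have hA := mul_le_mul_of_nonneg_left hpq (sq_nonneg a)
  have hC := mul_le_mul_of_nonneg_left hpq (sq_nonneg c)
  have hM : a * b * (1 - p ^ 2) = c ^ 2 * (1 - p ^ 2) := by rw [hab]
  refine ⟨![!![a * (1 + p), a * q; a * q, a * (1 - p)],
    !![a * (1 + p), c * q; c * q, b * (1 - p)],
    !![b * (1 + p), c * q; c * q, a * (1 - p)],
    !![a * (1 - p), -(a * q); -(a * q), a * (1 + p)],
    !![a * (1 - p), -(c * q); -(c * q), b * (1 + p)],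
    !![b * (1 - p), -(c * q); -(c * q), a * (1 + p)]], ?_, ?_, ?_, ?_, ?_⟩
  · intro i
    fin_cases i <;> apply psd_two <;> first | positivity | nlinarith
  all_goals
    ext i j
    fin_cases i <;> fin_cases j <;> simp <;> rw [ha] <;> (try rw [hb]) <;> (try rw [hc]) <;> (try rw [hk]) <;> ring
end

section
/- Let k ≥ 2 be an integer and set γ(k) = 2k/(k−1+√(k+1)). For every θ ∈ [0, π/2] there exist positive semidefinite real symmetric 2×2 matrices C_1, C_2, C_3, D_1, D_2, D_3 such that C_1 − kC_2 + C_3 + D_1 − kD_2 + D_3 = diag(1,−k), C_1 + C_2 − kC_3 + D_1 + D_2 − kD_3 = diag(−k,1), C_1 + C_2 + C_3 − D_1 − D_2 − D_3 = X_3(θ), and C_1 + C_2 + C_3 + D_1 + D_2 + D_3 = γ(k)·I_2. -/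
open Matrix

/-- `γ(k) = 2k/(k−1+√(k+1))`. -/
noncomputable def gammaK (k : ℕ) : ℝ :=
  2 * (k : ℝ) / ((k : ℝ) - 1 + Real.sqrt ((k : ℝ) + 1))

theorem psd_aux (f p q a b : ℝ) (hf : 0 ≤ f) (h : a ^ 2 + b ^ 2 ≤ 1) :
    (!![f * (p ^ 2 * (1 + a)), f * (p * q * b); f * (p * q * b), f * (q ^ 2 * (1 - a))] :
      Matrix (Fin 2) (Fin 2) ℝ).PosSemidef := by
  refine Matrix.PosSemidef.of_dotProduct_mulVec_nonneg ?_ ?_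
  · ext i j
    fin_cases i <;> fin_cases j <;> simp
  · intro v
    simp only [Matrix.mulVec, dotProduct, Fin.sum_univ_two, Pi.star_apply, star_trivial,
      Matrix.of_apply, Matrix.cons_val_zero, Matrix.cons_val_one, Matrix.cons_val', Matrix.cons_val_fin_one]
    generalize v 0 = x
    generalize v 1 = y
    have key : ∀ u w : ℝ, 0 ≤ (1 + a) * u ^ 2 + 2 * b * (u * w) + (1 - a) * w ^ 2 := by
      intro u w
      have ha1 : -1 ≤ a := by nlinarith [sq_nonneg b]
      have ha2 : a ≤ 1 := by nlinarith [sq_nonneg b]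
      nlinarith [sq_nonneg ((1 + a) * u + b * w), sq_nonneg ((1 - a) * w + b * u),
        mul_nonneg (sub_nonneg.2 h) (sq_nonneg u), mul_nonneg (sub_nonneg.2 h) (sq_nonneg w)]
    have := mul_nonneg hf (key (p * x) (q * y))
    nlinarith [this]

/-- For every integer `k ≥ 2` and every `θ ∈ [0, π/2]` there exist positive semidefinite real
symmetric 2×2 matrices `C_1, C_2, C_3, D_1, D_2, D_3` satisfying the indicated equations. -/
theorem stmt_3 (k : ℕ) (hk : 2 ≤ k) (θ : ℝ) (hθ : θ ∈ Set.Icc (0 : ℝ) (Real.pi / 2)) :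
    ∃ C D : Fin 3 → Matrix (Fin 2) (Fin 2) ℝ,
      (∀ i, (C i).PosSemidef) ∧ (∀ i, (D i).PosSemidef) ∧
      C 0 - (k : ℝ) • C 1 + C 2 + D 0 - (k : ℝ) • D 1 + D 2 = !![(1 : ℝ), 0; 0, -(k : ℝ)] ∧
      C 0 + C 1 - (k : ℝ) • C 2 + D 0 + D 1 - (k : ℝ) • D 2 = !![-(k : ℝ), 0; 0, 1] ∧
      C 0 + C 1 + C 2 - D 0 - D 1 - D 2 = X3 θ ∧
      C 0 + C 1 + C 2 + D 0 + D 1 + D 2 = gammaK k • (1 : Matrix (Fin 2) (Fin 2) ℝ) := by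
  obtain ⟨s, hs⟩ : ∃ s, s = Real.sqrt ((k : ℝ) + 1) := ⟨_, rfl⟩
  have hk' : (2 : ℝ) ≤ k := by exact_mod_cast hk
  have hs2 : s ^ 2 = k + 1 := by rw [hs]; exact Real.sq_sqrt (by linarith)
  have hs0 : 0 ≤ s := by rw [hs]; exact Real.sqrt_nonneg _
  have hs1 : 1 < s := by nlinarith
  have hkk : (k : ℝ) = s ^ 2 - 1 := by linarith
  have h1 : s ≠ 0 := by positivity
  have h2 : s + 2 ≠ 0 := by positivity
  have hg : gammaK k = 2 * (s + 1) / (s + 2) := by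
    unfold gammaK
    rw [← hs, hkk]
    have h3 : s ^ 2 - 1 - 1 + s ≠ 0 := by nlinarith
    field_simp
    ring
  have hcs := Real.sin_sq_add_cos_sq θ
  unfold X3
  rw [hg]
  generalize Real.cos θ = c at *
  generalize Real.sin θ = d at *
  have hρ : 0 ≤ s ^ 2 - 2 := by linarith
  obtain ⟨f, hf⟩ : ∃ f, f = 1 / (2 * (s * (s + 2))) := ⟨_, rfl⟩
  have hf0 : 0 ≤ f := by rw [hf]; positivity
  have h4 : (s + 1) ^ 2 + 1 ≠ 0 := by positivity
  obtain ⟨t, ht⟩ : ∃ t, t = 2 * (s + 1) / ((s + 1) ^ 2 + 1) := ⟨_, rfl⟩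
  have ht0 : 0 ≤ t := by rw [ht]; positivity
  have ht1 : t ≤ 1 := by
    rw [ht, div_le_one (by positivity)]; nlinarith
  have ht2 : t * ((s + 1) ^ 2 + 1) = 2 * (s + 1) := by rw [ht]; field_simp
  have hf2 : f * (2 * (s * (s + 2))) = 1 := by rw [hf]; field_simp
  have hab : (t * c) ^ 2 + d ^ 2 ≤ 1 := by
    have : t ^ 2 ≤ 1 := by nlinarith
    nlinarith [mul_nonneg (sub_nonneg.2 this) (sq_nonneg c)]
  have hab' : (-(t * c)) ^ 2 + (-d) ^ 2 ≤ 1 := by simpa using hab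
  have hγ : 2 * (s + 1) / (s + 2) = f * (4 * s * (s + 1)) := by
    rw [hf]; field_simp; norm_num
  rw [hγ, hkk]
  let M : ℝ → ℝ → ℝ → ℝ → ℝ → Matrix (Fin 2) (Fin 2) ℝ := fun f p q a b =>
    !![f * (p ^ 2 * (1 + a)), f * (p * q * b); f * (p * q * b), f * (q ^ 2 * (1 - a))]
  have hM : ∀ f p q a b : ℝ, 0 ≤ f → a ^ 2 + b ^ 2 ≤ 1 → (M f p q a b).PosSemidef :=
    fun f p q a b => psd_aux f p q a b
  have hfr : 0 ≤ f * (s ^ 2 - 2) := mul_nonneg hf0 hρ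
  refine ⟨![M (f * (s ^ 2 - 2)) 1 1 c d, M f 1 (s + 1) (t * c) d, M f (s + 1) 1 (t * c) d],
    ![M (f * (s ^ 2 - 2)) 1 1 (-c) (-d), M f 1 (s + 1) (-(t * c)) (-d),
      M f (s + 1) 1 (-(t * c)) (-d)], ?_, ?_, ?_, ?_, ?_, ?_⟩
  · intro i
    fin_cases i
    · exact hM _ _ _ _ _ hfr (by linarith)
    · exact hM _ _ _ _ _ hf0 hab
    · exact hM _ _ _ _ _ hf0 hab
  · intro i
    fin_cases i
    · exact hM _ _ _ _ _ hfr (by linarith [neg_sq c, neg_sq d])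
    · exact hM _ _ _ _ _ hf0 hab'
    · exact hM _ _ _ _ _ hf0 hab'
  all_goals
    ext i j
    fin_cases i <;> fin_cases j <;> simp [M]
  all_goals first
    | ring1
    | linear_combination hf2
    | linear_combination (s ^ 2 - 1) * hf2
    | linear_combination (-(s ^ 2 - 1)) * hf2
    | linear_combination (-1 : ℝ) * hf2
    | linear_combination d * hf2
    | linear_combination c * hf2 + 2 * f * c * ht2
    | linear_combination (-c) * hf2 - 2 * f * c * ht2
end

section
/- Fix an integer k ≥ 3, let S = (S_1, S_2, S_3) be the tuple of 5×5 real diagonal matrices S_1 = diag(1, 0, −1/(k−1), 0, 0), S_2 = diag(0, 1, −1/(k−1), 0, 0), S_3 = diag(0, 0, 0, −1, 1), and let A(k) be as defined. Then for every γ ∈ ℝ the following are equivalent: (i) for every θ ∈ [0, π/2], the triple (diag(1,−k), diag(−k,1), X_3(θ)) belongs to level 2 of γ·W^min(D_S^ℝ(1)); (ii) every tuple in D_{A(k)}^ℝ(2) belongs to level 2 of γ·W^min(D_{A(k)}^ℝ(1)). -/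
open Matrix
open scoped Kronecker Pointwise

/-- Membership in the `n`-th level of the real free spectrahedron determined by the tuple `A`. -/
def memLevel {g : ℕ} {d n : Type*} [Fintype d] [DecidableEq d] [Fintype n] [DecidableEq n]
    (A : Fin g → Matrix d d ℝ) (X : Fin g → Matrix n n ℝ) : Prop :=
  (∀ j, (X j).IsSymm) ∧
    ((1 : Matrix (d × n) (d × n) ℝ) - ∑ j, A j ⊗ₖ X j).PosSemidef

/-- The defining tuple `A(k)`: `A_j(k) = diag(δ_{1j},…,δ_{kj}, −1, 0, 0)` for `j ≤ k` and
`A_{k+1}(k) = diag(0,…,0, −1, 1)` (with `k+1` zeros). -/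
noncomputable def Amat (k : ℕ) (j : Fin (k + 1)) : Matrix (Fin (k + 3)) (Fin (k + 3)) ℝ :=
  Matrix.diagonal fun i =>
    if (j : ℕ) < k then
      (if (i : ℕ) = (j : ℕ) then 1 else if (i : ℕ) = k then -1 else 0)
    else
      (if (i : ℕ) = k + 1 then -1 else if (i : ℕ) = k + 2 then 1 else 0)

/-- The tuple `S = (S_1, S_2, S_3)` of 5×5 real diagonal matrices. -/
noncomputable def Smat (k : ℕ) : Fin 3 → Matrix (Fin 5) (Fin 5) ℝ
  | 0 => Matrix.diagonal ![1, 0, -(1 / ((k : ℝ) - 1)), 0, 0]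
  | 1 => Matrix.diagonal ![0, 1, -(1 / ((k : ℝ) - 1)), 0, 0]
  | 2 => Matrix.diagonal ![0, 0, 0, -1, 1]

/-- Level one of the real free spectrahedron `D_A^ℝ(1)`, viewed as a subset of `ℝ^g`. -/
def level1 {g d : ℕ} (A : Fin g → Matrix (Fin d) (Fin d) ℝ) : Set (Fin g → ℝ) :=
  {x | ((1 : Matrix (Fin d) (Fin d) ℝ) - ∑ j, x j • A j).PosSemidef}

/-- Membership in level `n` of the minimal matrix convex set `W^min(K)`:
`X_j = Σ_i x_j^{(i)} P_i` where `x^{(i)} ∈ K` and the `P_i` are PSD with `Σ_i P_i = I`. -/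
def memWmin {g : ℕ} (K : Set (Fin g → ℝ)) {n : ℕ}
    (X : Fin g → Matrix (Fin n) (Fin n) ℝ) : Prop :=
  ∃ (s : ℕ) (x : Fin s → Fin g → ℝ) (P : Fin s → Matrix (Fin n) (Fin n) ℝ),
    1 ≤ s ∧ (∀ i, x i ∈ K) ∧ (∀ i, (P i).PosSemidef) ∧ (∑ i, P i = 1) ∧
    ∀ j, X j = ∑ i, x i j • P i

theorem psd2_of {M : Matrix (Fin 2) (Fin 2) ℝ} (hs : M 1 0 = M 0 1) (h0 : 0 ≤ M 0 0) (h1 : 0 ≤ M 1 1)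
    (hd : M 0 1 ^ 2 ≤ M 0 0 * M 1 1) : M.PosSemidef := by
  apply Matrix.PosSemidef.of_dotProduct_mulVec_nonneg
  · ext i j
    fin_cases i <;> fin_cases j <;> simp [hs]
  · intro v
    simp [dotProduct, Matrix.mulVec, Fin.sum_univ_two, hs]
    rcases h0.eq_or_lt with h | h
    · have : M 0 1 = 0 := by
        rw [← h] at hd; nlinarith
      rw [← h, this]
      nlinarith [mul_nonneg h1 (sq_nonneg (v 1))]
    · have key : 0 ≤ M 0 0 * (v 0 * (M 0 0 * v 0 + M 0 1 * v 1) + v 1 * (M 0 1 * v 0 + M 1 1 * v 1)) := by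
        nlinarith [sq_nonneg (M 0 0 * v 0 + M 0 1 * v 1), mul_nonneg (sub_nonneg.2 hd) (sq_nonneg (v 1))]
      exact nonneg_of_mul_nonneg_right key h

theorem psd2_quad {M : Matrix (Fin 2) (Fin 2) ℝ} (h : M.PosSemidef) (u v : ℝ) :
    M 1 0 = M 0 1 ∧ 0 ≤ M 0 0 * u ^ 2 + 2 * M 0 1 * u * v + M 1 1 * v ^ 2 := by
  have hs : M 1 0 = M 0 1 := by
    have := h.1.apply 0 1
    simpa using this
  refine ⟨hs, ?_⟩
  have := h.dotProduct_mulVec_nonneg ![u, v]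
  simp [dotProduct, Matrix.mulVec, Fin.sum_univ_two, hs] at this
  nlinarith

theorem psd2_sym {M : Matrix (Fin 2) (Fin 2) ℝ} (h : M.PosSemidef) : M 1 0 = M 0 1 := (psd2_quad h 0 0).1
theorem psd2_0 {M : Matrix (Fin 2) (Fin 2) ℝ} (h : M.PosSemidef) : 0 ≤ M 0 0 := by
  simpa using (psd2_quad h 1 0).2
theorem psd2_1 {M : Matrix (Fin 2) (Fin 2) ℝ} (h : M.PosSemidef) : 0 ≤ M 1 1 := by
  simpa using (psd2_quad h 0 1).2
theorem psd2_d {M : Matrix (Fin 2) (Fin 2) ℝ} (h : M.PosSemidef) : M 0 1 ^ 2 ≤ M 0 0 * M 1 1 := by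
  have h0 := h.det_nonneg
  rw [Matrix.det_fin_two, psd2_sym h] at h0
  nlinarith

/-- diagonal coefficients -/
noncomputable def Aent (k : ℕ) (i : Fin (k + 3)) (j : Fin (k + 1)) : ℝ :=
    if (j : ℕ) < k then
      (if (i : ℕ) = (j : ℕ) then 1 else if (i : ℕ) = k then -1 else 0)
    else
      (if (i : ℕ) = k + 1 then -1 else if (i : ℕ) = k + 2 then 1 else 0)

theorem Asum_cases {M : Type*} [AddCommGroup M] [Module ℝ M] (k : ℕ) (V : Fin (k + 1) → M)
    (p : M → Prop) :
    (∀ i, p (∑ j, Aent k i j • V j)) ↔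
      (∀ j : Fin k, p (V j.castSucc)) ∧ p (-∑ j : Fin k, V j.castSucc) ∧ p (-V (Fin.last k)) ∧
        p (V (Fin.last k)) := by
  have e1 : ∀ j : Fin k, ∑ l, Aent k ⟨j, by omega⟩ l • V l = V j.castSucc := by
    intro j
    rw [Fin.sum_univ_castSucc, Finset.sum_eq_single j]
    · have h1 : (j : ℕ) ≠ k + 1 := by omega
      have h2 : (j : ℕ) ≠ k + 2 := by omega
      simp [Aent, h1, h2]
    · intro l _ hl
      have h1 : (j : ℕ) ≠ l := fun h => hl (Fin.ext h.symm)
      have h2 : (j : ℕ) ≠ k := by omega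
      simp [Aent, h1, h2]
    · simp
  have e2 : ∑ l, Aent k ⟨k, by omega⟩ l • V l = -∑ j : Fin k, V j.castSucc := by
    rw [Fin.sum_univ_castSucc, ← Finset.sum_neg_distrib]
    have : ∀ l : Fin k, k ≠ (l : ℕ) := by intro l; omega
    simp [Aent, this]
  have e3 : ∑ l, Aent k ⟨k + 1, by omega⟩ l • V l = -V (Fin.last k) := by
    rw [Fin.sum_univ_castSucc]
    have : ∀ l : Fin k, k + 1 ≠ (l : ℕ) := by intro l; omega
    simp [Aent, this]
  have e4 : ∑ l, Aent k ⟨k + 2, by omega⟩ l • V l = V (Fin.last k) := by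
    rw [Fin.sum_univ_castSucc]
    have : ∀ l : Fin k, k + 2 ≠ (l : ℕ) := by intro l; omega
    simp [Aent, this]
  constructor
  · intro h
    exact ⟨fun j => e1 j ▸ h _, e2 ▸ h _, e3 ▸ h _, e4 ▸ h _⟩
  · rintro ⟨h1, h2, h3, h4⟩ i
    obtain ⟨i, hi⟩ := i
    rcases lt_trichotomy i k with h | h | h
    · rw [e1 ⟨i, h⟩]; exact h1 _
    · subst h; rw [e2]; exact h2
    · have : i = k + 1 ∨ i = k + 2 := by omega
      rcases this with h | h
      · subst h; rw [e3]; exact h3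
      · subst h; rw [e4]; exact h4

theorem mem_level1_A (k : ℕ) (x : Fin (k + 1) → ℝ) :
    x ∈ level1 (Amat k) ↔ (∀ j : Fin k, x j.castSucc ≤ 1) ∧ 0 ≤ 1 + ∑ j : Fin k, x j.castSucc ∧
      -1 ≤ x (Fin.last k) ∧ x (Fin.last k) ≤ 1 := by
  have : (1 : Matrix (Fin (k+3)) (Fin (k+3)) ℝ) - ∑ j, x j • Amat k j
      = Matrix.diagonal (fun i => 1 - ∑ j, Aent k i j • x j) := by
    ext a b
    rw [Matrix.sub_apply, Matrix.sum_apply]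
    by_cases h : a = b
    · subst h
      simp [Amat, Aent, mul_comm]
    · simp [Amat, h]
  unfold level1
  rw [Set.mem_ofPred_eq, this, Matrix.posSemidef_diagonal_iff,
    Asum_cases k x (fun y => 0 ≤ 1 - y)]
  refine and_congr (forall_congr' fun j => sub_nonneg) (and_congr (by simp) (and_congr ?_ sub_nonneg))
  constructor <;> intro h <;> linarith

theorem mem_level1_S (k : ℕ) (hk : 3 ≤ k) (x : Fin 3 → ℝ) :
    x ∈ level1 (Smat k) ↔ x 0 ≤ 1 ∧ x 1 ≤ 1 ∧ 0 ≤ (k - 1 : ℝ) + x 0 + x 1 ∧ -1 ≤ x 2 ∧ x 2 ≤ 1 := by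
  have hk' : (3 : ℝ) ≤ k := by exact_mod_cast hk
  have hk1 : (0 : ℝ) < k - 1 := by linarith
  have : (1 : Matrix (Fin 5) (Fin 5) ℝ) - ∑ j, x j • Smat k j
      = Matrix.diagonal ![1 - x 0, 1 - x 1, ((k - 1 : ℝ) + x 0 + x 1) / (k - 1), 1 + x 2, 1 - x 2] := by
    have e : ((k - 1 : ℝ) + x 0 + x 1) / (k - 1) = 1 + x 0 * (1 / (k - 1)) + x 1 * (1/(k-1)) := by
      field_simp
    rw [e]
    ext a b
    fin_cases a <;> fin_cases b <;> simp [Fin.sum_univ_three, Smat] <;> try ring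
  unfold level1
  rw [Set.mem_ofPred_eq, this, Matrix.posSemidef_diagonal_iff]
  simp only [Fin.forall_fin_succ]
  simp [div_nonneg_iff, hk1.le, hk1.not_ge]
  intro _ _ _ _
  constructor <;> intro h <;> linarith

theorem memLevel_A (k : ℕ) (X : Fin (k + 1) → Matrix (Fin 2) (Fin 2) ℝ) :
    memLevel (Amat k) X ↔ (∀ j, (X j).IsSymm) ∧ (∀ j : Fin k, (1 - X j.castSucc).PosSemidef) ∧
      (1 + ∑ j : Fin k, X j.castSucc).PosSemidef ∧
      (1 + X (Fin.last k)).PosSemidef ∧ (1 - X (Fin.last k)).PosSemidef := by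
  unfold memLevel
  refine and_congr_right fun hs => ?_
  have h1 := Asum_cases k X (fun y => (1 - y).PosSemidef)
  simp only [sub_neg_eq_add] at h1
  rw [← h1]
  have e : ∀ (a b : Fin (k+3)) (u v : Fin 2), ((1 : Matrix (Fin (k+3) × Fin 2) (Fin (k+3) × Fin 2) ℝ) - ∑ j, Amat k j ⊗ₖ X j) (a, u) (b, v)
      = if a = b then (1 - ∑ j, Aent k a j • X j) u v else 0 := by
    intro a b u v
    rw [Matrix.sub_apply, Matrix.sum_apply]
    by_cases h : a = b
    · subst h
      have hA : ∀ j, Amat k j = Matrix.diagonal (fun i => Aent k i j) := fun j => rfl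
      simp [hA, Matrix.sum_apply, Matrix.one_apply]
    · simp [Amat, h]
  constructor
  · intro h i
    have := h.submatrix (fun u : Fin 2 => (i, u))
    convert this using 1
    ext u v
    rw [Matrix.submatrix_apply, e, if_pos rfl]
  · intro h
    apply Matrix.PosSemidef.of_dotProduct_mulVec_nonneg
    · ext ⟨a, u⟩ ⟨b, v⟩
      rw [Matrix.conjTranspose_apply, e, e]
      by_cases hab : a = b
      · subst hab
        have := (h a).1.apply u v
        simpa using this
      · simp [hab, Ne.symm hab]
    · intro v
      have : star v ⬝ᵥ (((1 : Matrix (Fin (k+3) × Fin 2) (Fin (k+3) × Fin 2) ℝ) - ∑ j, Amat k j ⊗ₖ X j) *ᵥ v)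
        = ∑ a, star (fun u => v (a, u)) ⬝ᵥ ((1 - ∑ j, Aent k a j • X j) *ᵥ (fun u => v (a, u))) := by
        simp only [dotProduct, Matrix.mulVec, Fintype.sum_prod_type, e]
        refine Finset.sum_congr rfl fun a _ => Finset.sum_congr rfl fun u _ => ?_
        congr 1
        rw [Finset.sum_eq_single a]
        · simp
        · intro b _ hb
          simp [Ne.symm hb]
        · simp
      rw [this]
      exact Finset.sum_nonneg fun a _ => (h a).dotProduct_mulVec_nonneg _

theorem real_core (b t κ d a v1 v2 x r : ℝ) (hb : 0 ≤ b) (ht : 0 < t) (hκ0 : 0 ≤ κ)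
    (hκ : κ ^ 2 + 2 * b * κ = t * b) (hd : d * (t / 2 + b) = t * (b + κ))
    (h2κ : 2 * κ ≤ t)
    (ha0 : 0 ≤ a) (ha1 : a ≤ 1) (hv : v1 ^ 2 + v2 ^ 2 ≤ a ^ 2) (hv' : v1 ^ 2 + v2 ^ 2 ≤ (1 - a) ^ 2)
    (hn : x ^ 2 + r ^ 2 = 1) :
    0 ≤ t * a + b + d * (v1 * x + v2 * r) ∧
    (t * v1 + (b + 2 * κ * a) * x) ^ 2 + (t * v2 + (b + 2 * κ * a) * r) ^ 2
      ≤ (t * a + b + d * (v1 * x + v2 * r)) ^ 2 := by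
  have hs2 : (v1 * x + v2 * r) ^ 2 ≤ v1 ^ 2 + v2 ^ 2 := by
    have : (v1 * x + v2 * r) ^ 2 + (v1 * r - v2 * x) ^ 2 = (v1 ^ 2 + v2 ^ 2) * (x ^ 2 + r ^ 2) := by ring
    rw [hn] at this
    nlinarith [sq_nonneg (v1 * r - v2 * x)]
  obtain ⟨s, hs⟩ : ∃ s, s = v1 * x + v2 * r := ⟨_, rfl⟩
  rw [← hs] at hs2 ⊢
  have hsa : |s| ≤ a := abs_le_of_sq_le_sq (hs2.trans hv) ha0
  have hsa' : |s| ≤ 1 - a := abs_le_of_sq_le_sq (hs2.trans hv') (by linarith)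
  have hpos : 0 < t / 2 + b := by linarith
  have hd0 : 0 ≤ d := by
    by_contra h
    push Not at h
    nlinarith [mul_nonneg ht.le (add_nonneg hb hκ0), mul_neg_of_neg_of_pos h hpos]
  have hdt : d ≤ t := by
    by_contra h
    push Not at h
    nlinarith [mul_pos (sub_pos.2 h) hpos, mul_nonneg ht.le (sub_nonneg.2 h2κ)]
  have hkey : b * (t - d) ≤ κ ^ 2 := by
    have : (κ ^ 2 - b * (t - d)) * (t / 2 + b) = κ ^ 2 * b := by
      have e : b * (t - d) * (t / 2 + b) = t * b * (t / 2 - κ) := by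
        have : b * (t - d) * (t / 2 + b) = b * t * (t / 2 + b) - b * (d * (t / 2 + b)) := by ring
        rw [this, hd]; ring
      have e2 : t * b * (t / 2 - κ) = (κ ^ 2 + 2 * b * κ) * (t/2 - κ) := by rw [hκ]
      have e3 : κ * (κ ^ 2 + 2 * b * κ) = κ * (t * b) := by rw [hκ]
      linear_combination (-1) * e - e2 + e3
    have h0 : 0 ≤ (κ ^ 2 - b * (t - d)) * (t / 2 + b) := by rw [this]; positivity
    nlinarith [nonneg_of_mul_nonneg_left h0 hpos]
  obtain ⟨hs1, hs3⟩ := abs_le.1 hsa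
  obtain ⟨hs4, hs5⟩ := abs_le.1 hsa'
  constructor
  · nlinarith [mul_nonneg hd0 (by linarith : 0 ≤ a + s), mul_nonneg (sub_nonneg.2 hdt) ha0]
  have expand : (t * a + b + d * s) ^ 2 - ((t * v1 + (b + 2 * κ * a) * x) ^ 2 + (t * v2 + (b + 2 * κ * a) * r) ^ 2)
     = t ^ 2 * (a ^ 2 - (v1 ^ 2 + v2 ^ 2)) + 2 * (1 - 2 * a) * (κ ^ 2 * a - s * (b * (t - d))) + d ^ 2 * s ^ 2 := by
    have e1 : (t * v1 + (b + 2 * κ * a) * x) ^ 2 + (t * v2 + (b + 2 * κ * a) * r) ^ 2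
      = t ^ 2 * (v1 ^ 2 + v2 ^ 2) + (b + 2 * κ * a) ^ 2 * (x ^ 2 + r ^ 2) + 2 * t * (b + 2 * κ * a) * (v1 * x + v2 * r) := by ring
    rw [e1, hn, ← hs]
    linear_combination (-2 * a) * hκ + 4 * a * s * hd
  have hbd : 0 ≤ b * (t - d) := mul_nonneg hb (sub_nonneg.2 hdt)
  have hsq : 0 ≤ d ^ 2 * s ^ 2 := by positivity
  have hsb : |s * (b * (t - d))| ≤ |s| * κ ^ 2 := by
    rw [abs_mul, abs_of_nonneg hbd]
    exact mul_le_mul_of_nonneg_left hkey (abs_nonneg s)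
  obtain ⟨q1, q2⟩ := abs_le.1 hsb
  have k2 : 0 ≤ κ ^ 2 := sq_nonneg _
  rcases le_total a (1/2) with h | h
  · have : 0 ≤ κ ^ 2 * a - s * (b * (t - d)) := by nlinarith
    have h3 : 0 ≤ (1 - 2 * a) * (κ ^ 2 * a - s * (b * (t - d))) := mul_nonneg (by linarith) this
    have h4 : 0 ≤ t ^ 2 * (a ^ 2 - (v1 ^ 2 + v2 ^ 2)) := mul_nonneg (sq_nonneg _) (by linarith)
    linarith
  · have h4 : 0 ≤ t ^ 2 * ((1 - a) ^ 2 - (v1 ^ 2 + v2 ^ 2)) := mul_nonneg (sq_nonneg _) (by linarith)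
    have h5 : 4 * κ ^ 2 ≤ t ^ 2 := by nlinarith
    have h8 := mul_nonneg k2 (sub_nonneg.2 hsa')
    have h6 : 0 ≤ t ^ 2 - 2 * (κ ^ 2 * a - s * (b * (t - d))) := by linarith
    have h7 : 0 ≤ (2 * a - 1) * (t ^ 2 - 2 * (κ ^ 2 * a - s * (b * (t - d)))) := mul_nonneg (by linarith) h6
    have e9 : t ^ 2 * (a ^ 2 - (v1 ^ 2 + v2 ^ 2)) + 2 * (1 - 2 * a) * (κ ^ 2 * a - s * (b * (t - d))) + d ^ 2 * s ^ 2
      = t ^ 2 * ((1 - a) ^ 2 - (v1 ^ 2 + v2 ^ 2)) + (2 * a - 1) * (t ^ 2 - 2 * (κ ^ 2 * a - s * (b * (t - d)))) + d ^ 2 * s ^ 2 := by ring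
    rw [e9] at expand
    linarith

/-- the traceless unit matrix -/
noncomputable def refl2 (x r : ℝ) : Matrix (Fin 2) (Fin 2) ℝ := !![x, r; r, -x]

/-- building block -/
noncomputable def Wm (b κ d x r : ℝ) (E : Matrix (Fin 2) (Fin 2) ℝ) : Matrix (Fin 2) (Fin 2) ℝ :=
  (b + κ * (E 0 0 + E 1 1)) • refl2 x r + (d * ((E 0 0 - E 1 1) / 2 * x + E 0 1 * r)) • 1

theorem core1 (b t κ d x r : ℝ) (hb : 0 ≤ b) (ht : 0 < t) (hκ0 : 0 ≤ κ)
    (hκ : κ ^ 2 + 2 * b * κ = t * b) (hd : d * (t / 2 + b) = t * (b + κ))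
    (h2κ : 2 * κ ≤ t) (hn : x ^ 2 + r ^ 2 = 1) (E : Matrix (Fin 2) (Fin 2) ℝ) (hE : E.PosSemidef)
    (hE' : (1 - E).PosSemidef) : (t • E + b • 1 + Wm b κ d x r E).PosSemidef := by
  have e0 := psd2_0 hE
  have e1 := psd2_1 hE
  have ed := psd2_d hE
  have es := psd2_sym hE
  have f0 := psd2_0 hE'
  have f1 := psd2_1 hE'
  have fd := psd2_d hE'
  simp at f0 f1 fd
  obtain ⟨h1, h2⟩ := real_core b t κ d ((E 0 0 + E 1 1) / 2) ((E 0 0 - E 1 1) / 2) (E 0 1) x r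
    hb ht hκ0 hκ hd h2κ (by linarith) (by linarith) (by nlinarith) (by nlinarith) hn
  set al := t * ((E 0 0 + E 1 1) / 2) + b + d * ((E 0 0 - E 1 1) / 2 * x + E 0 1 * r) with hal
  set y1 := t * ((E 0 0 - E 1 1) / 2) + (b + 2 * κ * ((E 0 0 + E 1 1) / 2)) * x with hy1
  set y2 := t * E 0 1 + (b + 2 * κ * ((E 0 0 + E 1 1) / 2)) * r with hy2
  have g0 : (t • E + b • 1 + Wm b κ d x r E) 0 0 = al + y1 := by
    simp [Wm, refl2, hal, hy1]; ring
  have g1 : (t • E + b • 1 + Wm b κ d x r E) 1 1 = al - y1 := by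
    simp [Wm, refl2, hal, hy1]; ring
  have g2 : (t • E + b • 1 + Wm b κ d x r E) 0 1 = y2 := by
    simp [Wm, refl2, hy2, -mul_eq_mul_right_iff]; ring
  have g3 : (t • E + b • 1 + Wm b κ d x r E) 1 0 = y2 := by
    simp [Wm, refl2, hy2, es, -mul_eq_mul_right_iff]; ring
  have hab : |y1| ≤ al := abs_le_of_sq_le_sq (by nlinarith [sq_nonneg y2]) h1
  obtain ⟨z1, z2⟩ := abs_le.1 hab
  apply psd2_of
  · rw [g3, g2]
  · rw [g0]; linarith
  · rw [g1]; linarith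
  · rw [g0, g1, g2]; nlinarith

theorem one_sub_psd {N : ℕ} (E : Fin N → Matrix (Fin 2) (Fin 2) ℝ) (hE : ∀ i, (E i).PosSemidef)
    (hs : ∑ i, E i = 1) (i : Fin N) : (1 - E i).PosSemidef := by
  rw [← hs, ← Finset.add_sum_erase _ _ (Finset.mem_univ i), add_sub_cancel_left]
  exact Matrix.posSemidef_sum _ fun j _ => hE j

theorem exists_polar (x r : ℝ) : ∃ l u v : ℝ, 0 ≤ l ∧ u ^ 2 + v ^ 2 = 1 ∧ x = l * u ∧ r = l * v ∧
    l ^ 2 = x ^ 2 + r ^ 2 := by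
  rcases eq_or_ne (x ^ 2 + r ^ 2) 0 with h | h
  · refine ⟨0, 1, 0, le_rfl, by norm_num, by nlinarith [sq_nonneg x, sq_nonneg r], by nlinarith [sq_nonneg x, sq_nonneg r], by rw [h]; norm_num⟩
  · have hp : 0 < x ^ 2 + r ^ 2 := lt_of_le_of_ne (by positivity) h.symm
    have hq := Real.sqrt_pos.2 hp
    have hq2 := Real.sq_sqrt hp.le
    refine ⟨√(x ^ 2 + r ^ 2), x / √(x ^ 2 + r ^ 2), r / √(x ^ 2 + r ^ 2), hq.le, ?_, ?_, ?_, hq2⟩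
    · rw [div_pow, div_pow, hq2]; field_simp
    · field_simp
    · field_simp

theorem core2 {N : ℕ} (E : Fin N → Matrix (Fin 2) (Fin 2) ℝ) (hE : ∀ i, (E i).PosSemidef)
    (hs : ∑ i, E i = 1) (Y : Matrix (Fin 2) (Fin 2) ℝ) (hY1 : (1 + Y).PosSemidef)
    (hY2 : (1 - Y).PosSemidef) (t b κ : ℝ) (ht : 0 < t) (ht1 : t ≤ 1) (hb : 0 ≤ b)
    (hbN : N * b = 1 - t) (hκ0 : 0 ≤ κ) (hκ : κ ^ 2 + 2 * b * κ = t * b)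
    (hmain : t ≤ N * b + 2 * κ) :
    ∃ Z : Fin N → Matrix (Fin 2) (Fin 2) ℝ, (∀ i, (t • E i + b • 1 + Z i).PosSemidef) ∧
      (∀ i, (t • E i + b • 1 - Z i).PosSemidef) ∧ ∑ i, Z i = t • Y := by
  have h2κ : 2 * κ ≤ t := by
    by_contra h
    push Not at h
    have : 0 < κ := by linarith
    nlinarith [mul_nonneg hb (by linarith : 0 ≤ 2 * κ - t)]
  have hpos : 0 < t / 2 + b := by linarith
  have hd : (t * (b + κ) / (t / 2 + b)) * (t / 2 + b) = t * (b + κ) := by field_simp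
  generalize t * (b + κ) / (t / 2 + b) = d at hd
  obtain ⟨l, u, v, hl, huv, hx, hr, hl2⟩ := exists_polar ((Y 0 0 - Y 1 1) / 2) (Y 0 1)
  have hYs : Y 1 0 = Y 0 1 := by simpa using psd2_sym hY1
  set y0 := (Y 0 0 + Y 1 1) / 2 with hy0
  have hYd : Y = y0 • 1 + l • refl2 u v := by
    ext i j
    fin_cases i <;> fin_cases j <;> simp [refl2, ← hx, ← hr, hYs, hy0] <;> ring
  have hl1 : l ≤ 1 + y0 := by
    have h0 := psd2_0 hY1
    have h1 := psd2_1 hY1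
    have hd := psd2_d hY1
    simp at h0 h1 hd
    exact abs_le_of_sq_le_sq' (by rw [hl2, hy0]; nlinarith) (by rw [hy0]; linarith) |>.2
  have hl1' : l ≤ 1 - y0 := by
    have h0 := psd2_0 hY2
    have h1 := psd2_1 hY2
    have hd := psd2_d hY2
    simp at h0 h1 hd
    exact abs_le_of_sq_le_sq' (by rw [hl2, hy0]; nlinarith) (by rw [hy0]; linarith) |>.2
  have hD : 0 < N * b + 2 * κ := by linarith
  have hc1 : t / (N * b + 2 * κ) ≤ 1 := (div_le_one hD).2 hmain
  have hc0 : 0 ≤ t / (N * b + 2 * κ) := by positivity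
  have hcD : t / (N * b + 2 * κ) * (N * b + 2 * κ) = t := by field_simp
  generalize t / (N * b + 2 * κ) = c at hc1 hc0 hcD
  have hE1 := one_sub_psd E hE hs
  have hp : ∀ i, (t • E i + b • 1 + Wm b κ d u v (E i)).PosSemidef := fun i =>
    core1 b t κ d u v hb ht hκ0 hκ hd h2κ huv _ (hE i) (hE1 i)
  have hm : ∀ i, (t • E i + b • 1 - Wm b κ d u v (E i)).PosSemidef := fun i => by
    have := core1 b t κ d (-u) (-v) hb ht hκ0 hκ hd h2κ (by rw [← huv]; ring) _ (hE i) (hE1 i)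
    convert this using 1
    ext a e
    fin_cases a <;> fin_cases e <;> simp [Wm, refl2] <;> ring
  have hE2 : ∀ i, (t • E i + b • (1 : Matrix (Fin 2) (Fin 2) ℝ)).PosSemidef := fun i =>
    ((hE i).smul ht.le).add (Matrix.PosSemidef.one.smul hb)
  have hlc : 0 ≤ l * c := mul_nonneg hl hc0
  have hlc1 : l * c ≤ l := by nlinarith
  refine ⟨fun i => (y0 * t) • (t • E i + b • 1) + (l * c) • Wm b κ d u v (E i), ?_, ?_, ?_⟩
  · intro i
    have h1 : 0 ≤ 1 + y0 * t - l * c := by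
      nlinarith
    convert ((hE2 i).smul h1).add ((hp i).smul hlc) using 1
    module
  · intro i
    have h1 : 0 ≤ 1 - y0 * t - l * c := by
      nlinarith
    convert ((hE2 i).smul h1).add ((hm i).smul hlc) using 1
    module
  · have hent : ∀ a e : Fin 2, ∑ i, E i a e = (1 : Matrix (Fin 2) (Fin 2) ℝ) a e := by
      intro a e; rw [← hs, Matrix.sum_apply]
    have s1 : ∑ i, (t • E i + b • (1 : Matrix (Fin 2) (Fin 2) ℝ)) = 1 := by
      rw [Finset.sum_add_distrib, ← Finset.smul_sum, hs, Finset.sum_const, Finset.card_univ, Fintype.card_fin,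
        ← Nat.cast_smul_eq_nsmul ℝ, smul_smul, hbN]
      module
    have s2 : ∑ i, Wm b κ d u v (E i) = (N * b + 2 * κ) • refl2 u v := by
      unfold Wm
      rw [Finset.sum_add_distrib, ← Finset.sum_smul, ← Finset.sum_smul]
      have q1 : ∑ i, (b + κ * (E i 0 0 + E i 1 1)) = N * b + 2 * κ := by
        rw [Finset.sum_add_distrib, ← Finset.mul_sum, Finset.sum_add_distrib, hent, hent]
        simp; ring
      have q2 : ∑ i, d * ((E i 0 0 - E i 1 1) / 2 * u + E i 0 1 * v) = 0 := by
        rw [← Finset.mul_sum, Finset.sum_add_distrib, ← Finset.sum_mul, ← Finset.sum_mul, ← Finset.sum_div,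
          Finset.sum_sub_distrib, hent, hent, hent]
        simp
      rw [q1, q2, zero_smul, add_zero]
    rw [Finset.sum_add_distrib, ← Finset.smul_sum, ← Finset.smul_sum, s1, s2, smul_smul, hYd, mul_assoc, hcD]
    module

theorem core3 {N : ℕ} (hN : 3 ≤ N) (E : Fin N → Matrix (Fin 2) (Fin 2) ℝ) (hE : ∀ i, (E i).PosSemidef)
    (hs : ∑ i, E i = 1) (Y : Matrix (Fin 2) (Fin 2) ℝ) (hY1 : (1 + Y).PosSemidef)
    (hY2 : (1 - Y).PosSemidef) (t b : ℝ) (ht : t ≤ 0) (htb : -t ≤ b) :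
    ∃ Z : Fin N → Matrix (Fin 2) (Fin 2) ℝ, (∀ i, (t • E i + b • 1 + Z i).PosSemidef) ∧
      (∀ i, (t • E i + b • 1 - Z i).PosSemidef) ∧ ∑ i, Z i = t • Y := by
  have hN' : (3 : ℝ) ≤ N := by exact_mod_cast hN
  have hE1 := one_sub_psd E hE hs
  set w : Fin N → ℝ := fun i => max 0 (1 - (E i 0 0 + E i 1 1)) with hw
  have hw0 : ∀ i, 0 ≤ w i := fun i => le_max_left _ _
  have hwE : ∀ i, ((1 - E i) - w i • 1).PosSemidef := by
    intro i
    rcases max_choice 0 (1 - (E i 0 0 + E i 1 1)) with h | h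
    · have : w i = 0 := h
      rw [this, zero_smul, sub_zero]; exact hE1 i
    · have : w i = 1 - (E i 0 0 + E i 1 1) := h
      rw [this]
      have e0 := psd2_0 (hE i)
      have e1 := psd2_1 (hE i)
      have ed := psd2_d (hE i)
      have es := psd2_sym (hE i)
      apply psd2_of <;> simp [es]
      · linarith
      · linarith
      · nlinarith
  have hW : 1 ≤ ∑ i, w i := by
    have hent : ∀ a e : Fin 2, ∑ i, E i a e = (1 : Matrix (Fin 2) (Fin 2) ℝ) a e := by
      intro a e; rw [← hs, Matrix.sum_apply]
    have h1 : ∑ i, (1 - (E i 0 0 + E i 1 1)) = N - 2 := by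
      rw [Finset.sum_sub_distrib, Finset.sum_add_distrib, hent, hent]
      simp; norm_num
    have h2 : ∑ i, (1 - (E i 0 0 + E i 1 1)) ≤ ∑ i, w i := Finset.sum_le_sum fun i _ => le_max_right _ _
    linarith
  have hW0 : 0 < ∑ i, w i := by linarith
  have hq : ∀ i, 0 ≤ w i / ∑ i, w i := fun i => div_nonneg (hw0 i) hW0.le
  have hq1 : ∀ i, w i / ∑ i, w i ≤ w i := fun i => div_le_self (hw0 i) hW
  have hqs : ∑ i, w i / ∑ i, w i = 1 := by rw [← Finset.sum_div, div_self hW0.ne']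
  generalize hqd : (fun i => w i / ∑ i, w i) = q at *
  have hq_ : ∀ i, w i / ∑ i, w i = q i := fun i => congrFun hqd i
  simp only [hq_] at hq hq1 hqs
  have nt : 0 ≤ -t := by linarith
  refine ⟨fun i => (t * q i) • Y, ?_, ?_, ?_⟩
  · intro i
    have := (((hwE i).smul nt).add ((hY2.smul (mul_nonneg nt (hq i))))).add
      (Matrix.PosSemidef.one.smul (add_nonneg (by linarith : 0 ≤ b + t) (mul_nonneg nt (sub_nonneg.2 (hq1 i)))))
    convert this using 1
    module
  · intro i
    have := (((hwE i).smul nt).add ((hY1.smul (mul_nonneg nt (hq i))))).add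
      (Matrix.PosSemidef.one.smul (add_nonneg (by linarith : 0 ≤ b + t) (mul_nonneg nt (sub_nonneg.2 (hq1 i)))))
    convert this using 1
    module
  · rw [← Finset.sum_smul, ← Finset.mul_sum, hqs, mul_one]

/-- the POVM attached to a point of level 2 -/
noncomputable def Epov (k : ℕ) (X : Fin (k + 1) → Matrix (Fin 2) (Fin 2) ℝ) (i : Fin (k + 1)) :
    Matrix (Fin 2) (Fin 2) ℝ :=
  ((k : ℝ) + 1)⁻¹ • (if i = Fin.last k then 1 + ∑ j : Fin k, X j.castSucc else 1 - X i)

theorem Epov_sum (k : ℕ) (X : Fin (k + 1) → Matrix (Fin 2) (Fin 2) ℝ) : ∑ i, Epov k X i = 1 := by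
  unfold Epov
  rw [← Finset.smul_sum, Fin.sum_univ_castSucc]
  have : ∀ i : Fin k, i.castSucc ≠ Fin.last k := fun i => (Fin.castSucc_lt_last i).ne
  simp only [this, if_true, if_false]
  have e : ∑ x : Fin k, (1 - X x.castSucc) + (1 + ∑ j : Fin k, X j.castSucc)
      = ((k : ℝ) + 1) • (1 : Matrix (Fin 2) (Fin 2) ℝ) := by
    rw [Finset.sum_sub_distrib, Finset.sum_const, Finset.card_univ, Fintype.card_fin,
        ← Nat.cast_smul_eq_nsmul ℝ]
    module
  rw [e, smul_smul, inv_mul_cancel₀ (by positivity), one_smul]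

theorem Epov_psd (k : ℕ) (X : Fin (k + 1) → Matrix (Fin 2) (Fin 2) ℝ)
    (h1 : ∀ j : Fin k, (1 - X j.castSucc).PosSemidef)
    (h2 : (1 + ∑ j : Fin k, X j.castSucc).PosSemidef) (i : Fin (k + 1)) : (Epov k X i).PosSemidef := by
  unfold Epov
  refine Matrix.PosSemidef.smul ?_ (by positivity)
  split_ifs with h
  · exact h2
  · obtain ⟨j, rfl⟩ := Fin.exists_castSucc_eq.2 h
    exact h1 j

/-- extreme points -/
noncomputable def vtx (k : ℕ) (e : ℝ) (i j : Fin (k + 1)) : ℝ :=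
  if j = Fin.last k then e else if j = i then -(k : ℝ) else 1

theorem vtx_mem (k : ℕ) (e : ℝ) (he : e = 1 ∨ e = -1) (i : Fin (k + 1)) :
    vtx k e i ∈ level1 (Amat k) := by
  have hc : ∀ i : Fin k, i.castSucc ≠ Fin.last k := fun i => (Fin.castSucc_lt_last i).ne
  rw [mem_level1_A]
  refine ⟨fun j => ?_, ?_, ?_, ?_⟩
  · simp only [vtx, hc, if_false]
    split_ifs
    · have : (0 : ℝ) ≤ k := by positivity
      linarith
    · exact le_rfl
  · have : ∀ j : Fin k, vtx k e i j.castSucc = 1 - if j.castSucc = i then (k + 1 : ℝ) else 0 := by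
      intro j
      simp only [vtx, hc, if_false]
      split_ifs <;> ring
    simp only [this]
    rw [Finset.sum_sub_distrib]
    have h2 : ∑ j : Fin k, (if j.castSucc = i then (k + 1 : ℝ) else 0) ≤ k + 1 := by
      have : ∑ j : Fin (k + 1), (if j = i then (k + 1 : ℝ) else 0) = k + 1 := by simp
      rw [Fin.sum_univ_castSucc] at this
      have h3 : (0 : ℝ) ≤ if Fin.last k = i then (k + 1 : ℝ) else 0 := by
        split_ifs <;> positivity
      linarith
    simp only [Finset.sum_const, Finset.card_univ, Fintype.card_fin, nsmul_eq_mul, mul_one]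
    linarith
  · simp only [vtx, if_true]; rcases he with h | h <;> rw [h] <;> norm_num
  · simp only [vtx, if_true]; rcases he with h | h <;> rw [h] <;> norm_num

theorem assemble (k : ℕ) (γ t b : ℝ) (hγ : γ * t = 1) (hb : ((k : ℝ) + 1) * b = 1 - t)
    (X Z : Fin (k + 1) → Matrix (Fin 2) (Fin 2) ℝ)
    (h1 : ∀ i, (t • Epov k X i + b • 1 + Z i).PosSemidef)
    (h2 : ∀ i, (t • Epov k X i + b • 1 - Z i).PosSemidef)
    (h3 : ∑ i, Z i = t • X (Fin.last k)) : memWmin (γ • level1 (Amat k)) X := by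
  have hsum : ∑ i, (t • Epov k X i + b • (1 : Matrix (Fin 2) (Fin 2) ℝ)) = 1 := by
    rw [Finset.sum_add_distrib, ← Finset.smul_sum, Epov_sum, Finset.sum_const, Finset.card_univ,
      Fintype.card_fin, ← Nat.cast_smul_eq_nsmul ℝ, smul_smul]
    push_cast
    rw [hb]
    module
  refine ⟨(k + 1) + (k + 1),
    Fin.addCases (fun i => γ • vtx k 1 i) (fun i => γ • vtx k (-1) i),
    Fin.addCases (fun i => (1 / 2 : ℝ) • (t • Epov k X i + b • 1 + Z i))
      (fun i => (1 / 2 : ℝ) • (t • Epov k X i + b • 1 - Z i)), by omega, ?_, ?_, ?_, ?_⟩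
  · intro i
    refine Fin.addCases (fun i => ?_) (fun i => ?_) i
    · simp only [Fin.addCases_left]
      exact Set.smul_mem_smul_set (vtx_mem k 1 (Or.inl rfl) i)
    · simp only [Fin.addCases_right]
      exact Set.smul_mem_smul_set (vtx_mem k (-1) (Or.inr rfl) i)
  · intro i
    refine Fin.addCases (fun i => ?_) (fun i => ?_) i
    · simp only [Fin.addCases_left]
      exact (h1 i).smul (by norm_num)
    · simp only [Fin.addCases_right]
      exact (h2 i).smul (by norm_num)
  · rw [Fin.sum_univ_add]
    simp only [Fin.addCases_left, Fin.addCases_right]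
    rw [← Finset.sum_add_distrib]
    refine Eq.trans ?_ hsum
    refine Finset.sum_congr rfl fun i _ => ?_
    module
  · intro j
    rw [Fin.sum_univ_add]
    simp only [Fin.addCases_left, Fin.addCases_right, Pi.smul_apply, smul_eq_mul]
    rw [← Finset.sum_add_distrib]
    by_cases hj : j = Fin.last k
    · subst hj
      simp only [vtx, if_true]
      have : ∀ i, (γ * 1) • (1 / 2 : ℝ) • (t • Epov k X i + b • 1 + Z i) +
          (γ * -1) • (1 / 2 : ℝ) • (t • Epov k X i + b • 1 - Z i) = γ • Z i := by
        intro i; module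
      simp only [this]
      rw [← Finset.smul_sum, h3, smul_smul, hγ, one_smul]
    · simp only [vtx, hj, if_false]
      have : ∀ i, (γ * if j = i then -(k : ℝ) else 1) • (1 / 2 : ℝ) • (t • Epov k X i + b • 1 + Z i) +
          (γ * if j = i then -(k : ℝ) else 1) • (1 / 2 : ℝ) • (t • Epov k X i + b • 1 - Z i)
          = γ • (t • Epov k X i + b • 1) -
            (if j = i then (γ * (k + 1)) • (t • Epov k X i + b • 1) else 0) := by
        intro i
        split_ifs
        · module
        · module
      simp only [this]
      rw [Finset.sum_sub_distrib, ← Finset.smul_sum, hsum, Finset.sum_ite_eq, if_pos (Finset.mem_univ _)]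
      have hE : ((k : ℝ) + 1) • Epov k X j = 1 - X j := by
        unfold Epov
        rw [if_neg hj, smul_smul, mul_inv_cancel₀ (by positivity), one_smul]
      have e : (γ * ((k : ℝ) + 1)) • (t • Epov k X j + b • (1 : Matrix (Fin 2) (Fin 2) ℝ))
        = (γ * t) • (((k : ℝ) + 1) • Epov k X j) + (γ * (((k : ℝ) + 1) * b)) • 1 := by module
      rw [e, hE, hb, hγ, mul_sub, hγ]
      module

theorem offdiag_le {F W : Matrix (Fin 2) (Fin 2) ℝ} (h1 : (F + W).PosSemidef) (h2 : (F - W).PosSemidef)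
    (hF : F 0 1 = 0) : W 0 1 ^ 2 ≤ F 0 0 * F 1 1 := by
  have a0 := psd2_0 h1
  have a1 := psd2_1 h1
  have ad := psd2_d h1
  have b0 := psd2_0 h2
  have b1 := psd2_1 h2
  have bd := psd2_d h2
  simp [hF] at a0 a1 ad b0 b1 bd
  have hf0 : 0 ≤ F 0 0 := by linarith
  have hf1 : 0 ≤ F 1 1 := by linarith
  have hq := mul_le_mul ad bd (sq_nonneg _) (mul_nonneg a0 a1)
  have hp0 : (F 0 0 + W 0 0) * (F 0 0 - W 0 0) ≤ F 0 0 ^ 2 := by nlinarith [sq_nonneg (W 0 0)]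
  have hp1 : (F 1 1 + W 1 1) * (F 1 1 - W 1 1) ≤ F 1 1 ^ 2 := by nlinarith [sq_nonneg (W 1 1)]
  have hp := mul_le_mul hp0 hp1 (mul_nonneg a1 (by linarith)) (sq_nonneg _)
  refine (abs_le_of_sq_le_sq' ?_ (mul_nonneg hf0 hf1)).2
  nlinarith

theorem nec (k : ℕ) (hk : 3 ≤ k) (γ : ℝ) (h : memWmin (γ • level1 (Smat k))
          (fun j : Fin 3 =>
            if j = 0 then !![(1 : ℝ), 0; 0, -(k : ℝ)]
            else if j = 1 then !![-(k : ℝ), 0; 0, 1]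
            else X3 (Real.pi / 2))) :
    ∃ t, γ * t = 1 ∧ 0 ≤ 1 - t ∧ 0 ≤ 1 + k * t ∧
      ((k : ℝ) + 1) * t ≤ 2 * √((1 - t) * (1 + k * t)) + (k - 1) * (1 - t) := by
  have hk' : (3 : ℝ) ≤ k := by exact_mod_cast hk
  obtain ⟨s, x, P, -, hx, hP, hPs, hX⟩ := h
  choose y hy hyx using fun i => Set.mem_smul_set.1 (hx i)
  simp only [mem_level1_S k hk] at hy
  have X0 := hX 0
  have X1 := hX 1
  have X2 := hX 2
  have hsm : ∀ j, ∑ i, x i j • P i = γ • ∑ i, y i j • P i := by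
    intro j
    rw [Finset.smul_sum]
    refine Finset.sum_congr rfl fun i _ => ?_
    rw [← hyx i, Pi.smul_apply, smul_assoc]
  rw [hsm] at X0 X1 X2
  simp only [if_true, one_ne_zero, if_false, show (2 : Fin 3) ≠ 0 by decide, show (2 : Fin 3) ≠ 1 by decide,
    X3, Real.cos_pi_div_two, Real.sin_pi_div_two] at X0 X1 X2
  have hγ : γ ≠ 0 := by
    rintro rfl
    have := congrFun (congrFun X0 0) 0
    simp at this
  obtain ⟨t, ht⟩ : ∃ t, γ * t = 1 := ⟨γ⁻¹, mul_inv_cancel₀ hγ⟩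
  have inv : ∀ A B : Matrix (Fin 2) (Fin 2) ℝ, A = γ • B → B = t • A := by
    intro A B h
    rw [h, smul_smul, mul_comm, ht, one_smul]
  have Y0 := inv _ _ X0
  have Y1 := inv _ _ X1
  have Y2 := inv _ _ X2
  have psd : ∀ f : Fin s → ℝ, (∀ i, 0 ≤ f i) → (∑ i, f i • P i).PosSemidef := fun f hf =>
    Matrix.posSemidef_sum _ fun i _ => (hP i).smul (hf i)
  have bound : ∀ f : Fin s → ℝ, (∀ i, 0 ≤ f i) → (∑ i, f i • P i) 0 1 = 0 →
      (∑ i, (f i * y i 2) • P i) 0 1 ^ 2 ≤ (∑ i, f i • P i) 0 0 * (∑ i, f i • P i) 1 1 := by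
    intro f hf h0
    refine offdiag_le ?_ ?_ h0
    · rw [← Finset.sum_add_distrib]
      have := psd (fun i => f i * (1 + y i 2)) (fun i => mul_nonneg (hf i) (by linarith [(hy i).2.2.2.1]))
      convert this using 2
      module
    · rw [← Finset.sum_sub_distrib]
      have := psd (fun i => f i * (1 - y i 2)) (fun i => mul_nonneg (hf i) (by linarith [(hy i).2.2.2.2]))
      convert this using 2
      module
  have F0 : ∑ i, (1 - y i 0) • P i = !![1 - t, 0; 0, 1 + k * t] := by
    simp only [sub_smul, one_smul]
    rw [Finset.sum_sub_distrib, hPs, Y0]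
    ext a b; fin_cases a <;> fin_cases b <;> simp; ring
  have F1 : ∑ i, (1 - y i 1) • P i = !![1 + k * t, 0; 0, 1 - t] := by
    simp only [sub_smul, one_smul]
    rw [Finset.sum_sub_distrib, hPs, Y1]
    ext a b; fin_cases a <;> fin_cases b <;> simp; ring
  have F2 : ∑ i, ((k - 1 : ℝ) + y i 0 + y i 1) • P i = !![(k - 1) * (1 - t), 0; 0, (k - 1) * (1 - t)] := by
    simp only [add_smul]
    rw [Finset.sum_add_distrib, Finset.sum_add_distrib, ← Finset.smul_sum, hPs, Y0, Y1]
    ext a b; fin_cases a <;> fin_cases b <;> simp <;> ring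
  have p0 := psd (fun i => 1 - y i 0) (fun i => by linarith [(hy i).1])
  rw [F0] at p0
  have t1 := psd2_0 p0
  have t2 := psd2_1 p0
  simp only [of_apply, cons_val', cons_val_zero, cons_val_one, cons_val_fin_one] at t1 t2
  refine ⟨t, ht, t1, t2, ?_⟩
  have B0 := bound (fun i => 1 - y i 0) (fun i => by linarith [(hy i).1]) (by rw [F0]; simp)
  have B1 := bound (fun i => 1 - y i 1) (fun i => by linarith [(hy i).2.1]) (by rw [F1]; simp)
  have B2 := bound (fun i => (k - 1 : ℝ) + y i 0 + y i 1) (fun i => (hy i).2.2.1) (by rw [F2]; simp)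
  rw [F0] at B0
  rw [F1] at B1
  rw [F2] at B2
  have tot : (∑ i, ((1 - y i 0) * y i 2) • P i) + (∑ i, ((1 - y i 1) * y i 2) • P i)
      + (∑ i, (((k - 1 : ℝ) + y i 0 + y i 1) * y i 2) • P i) = ((k : ℝ) + 1) • ∑ i, y i 2 • P i := by
    rw [← Finset.sum_add_distrib, ← Finset.sum_add_distrib, Finset.smul_sum]
    refine Finset.sum_congr rfl fun i _ => ?_
    module
  rw [Y2] at tot
  have tot' := congrFun (congrFun tot 0) 1
  simp only [Matrix.add_apply] at tot'
  generalize (∑ i, ((1 - y i 0) * y i 2) • P i) 0 1 = w0 at *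
  generalize (∑ i, ((1 - y i 1) * y i 2) • P i) 0 1 = w1 at *
  generalize (∑ i, (((k - 1 : ℝ) + y i 0 + y i 1) * y i 2) • P i) 0 1 = w2 at *
  simp at tot' B0 B1 B2
  rw [← tot']
  have c0 := Real.le_sqrt_of_sq_le B0
  have c1 := Real.le_sqrt_of_sq_le B1
  rw [mul_comm (1 + (k : ℝ) * t)] at c1
  have c2 : w2 ≤ (k - 1) * (1 - t) :=
    (abs_le_of_sq_le_sq' (by rw [sq ((k - 1 : ℝ) * _)]; exact B2) (mul_nonneg (by linarith) t1)).2
  linarith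

theorem suff (k : ℕ) (hk : 3 ≤ k) (γ t : ℝ) (ht : γ * t = 1) (t1 : 0 ≤ 1 - t) (t2 : 0 ≤ 1 + k * t)
    (hm : ((k : ℝ) + 1) * t ≤ 2 * √((1 - t) * (1 + k * t)) + (k - 1) * (1 - t))
    (X : Fin (k + 1) → Matrix (Fin 2) (Fin 2) ℝ) (hX : memLevel (Amat k) X) :
    memWmin (γ • level1 (Amat k)) X := by
  have hk' : (3 : ℝ) ≤ k := by exact_mod_cast hk
  obtain ⟨-, g1, g2, g3, g4⟩ := (memLevel_A k X).1 hX
  have hE := Epov_psd k X g1 g2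
  have hEs := Epov_sum k X
  have hk1 : (0 : ℝ) < k + 1 := by linarith
  obtain ⟨b, hb⟩ : ∃ b, ((k : ℝ) + 1) * b = 1 - t := ⟨(1 - t) / (k + 1), by field_simp⟩
  have hb0 : 0 ≤ b := by
    by_contra h
    push Not at h
    nlinarith
  have : ∃ Z : Fin (k + 1) → Matrix (Fin 2) (Fin 2) ℝ, (∀ i, (t • Epov k X i + b • 1 + Z i).PosSemidef) ∧
      (∀ i, (t • Epov k X i + b • 1 - Z i).PosSemidef) ∧ ∑ i, Z i = t • X (Fin.last k) := by
    have ht0 : t ≠ 0 := right_ne_zero_of_mul_eq_one ht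
    rcases lt_or_gt_of_ne ht0 with h | h
    · refine core3 (by omega) _ hE hEs _ g3 g4 t b h.le ?_
      nlinarith
    · have hq : 0 ≤ b * (b + t) := by positivity
      have hsq : √((1 - t) * (1 + k * t)) = (k + 1) * √(b * (b + t)) := by
        rw [← hb, show (1 + (k : ℝ) * t) = (k + 1) * (b + t) by linarith,
          show ((k : ℝ) + 1) * b * ((k + 1) * (b + t)) = (k + 1) ^ 2 * (b * (b + t)) by ring,
          Real.sqrt_mul (by positivity), Real.sqrt_sq hk1.le]
      rw [hsq, ← hb] at hm
      have hss := Real.sq_sqrt hq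
      have hbs : b ≤ √(b * (b + t)) := Real.le_sqrt_of_sq_le (by nlinarith)
      refine core2 _ hE hEs _ g3 g4 t b (√(b * (b + t)) - b) h (by linarith) hb0
        (by push_cast; exact hb) (by linarith) (by nlinarith) ?_
      push_cast
      have hm2 : ((k : ℝ) + 1) * t ≤ (k + 1) * (2 * √(b * (b + t)) + (k - 1) * b) := by linarith
      have := le_of_mul_le_mul_left hm2 hk1
      linarith
  obtain ⟨Z, z1, z2, z3⟩ := this
  exact assemble k γ t b ht hb X Z z1 z2 z3

theorem conv_dir (k : ℕ) (hk : 3 ≤ k) (γ θ : ℝ)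
    (h : ∀ X : Fin (k + 1) → Matrix (Fin 2) (Fin 2) ℝ,
      memLevel (Amat k) X → memWmin (γ • level1 (Amat k)) X) :
    memWmin (γ • level1 (Smat k))
          (fun j : Fin 3 =>
            if j = 0 then !![(1 : ℝ), 0; 0, -(k : ℝ)]
            else if j = 1 then !![-(k : ℝ), 0; 0, 1]
            else X3 θ) := by
  obtain ⟨m, rfl⟩ : ∃ m, k = m + 2 := ⟨k - 2, by omega⟩
  set A : Matrix (Fin 2) (Fin 2) ℝ := !![(1 : ℝ), 0; 0, -((m + 2 : ℕ) : ℝ)] with hA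
  set B : Matrix (Fin 2) (Fin 2) ℝ := !![-((m + 2 : ℕ) : ℝ), 0; 0, 1] with hB
  let V : Fin (m + 2) → Matrix (Fin 2) (Fin 2) ℝ := Fin.cons A (Fin.cons B (fun _ => 1))
  let X : Fin (m + 2 + 1) → Matrix (Fin 2) (Fin 2) ℝ := Fin.snoc V (X3 θ)
  have hXc : ∀ j : Fin (m + 2), X j.castSucc = V j := fun j => by simp [X]
  have hXl : X (Fin.last (m + 2)) = X3 θ := by simp [X]
  have hVs : 1 + ∑ j, V j = 0 := by
    rw [Fin.sum_univ_succ, Fin.sum_univ_succ]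
    simp only [V, Fin.cons_zero, Fin.cons_succ, Finset.sum_const, Finset.card_univ, Fintype.card_fin,
      ← Nat.cast_smul_eq_nsmul ℝ]
    ext a b
    fin_cases a <;> fin_cases b <;> simp [hA, hB] <;> ring
  have hlev : memLevel (Amat (m + 2)) X := by
    rw [memLevel_A]
    simp only [hXc, hXl]
    refine ⟨?_, ?_, ?_, ?_, ?_⟩
    · have hV : ∀ j, (V j).IsSymm := by
        intro j
        refine Fin.cases ?_ (fun j => ?_) j
        · ext a b; fin_cases a <;> fin_cases b <;> simp [V, hA]
        · refine Fin.cases ?_ (fun j => ?_) j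
          · ext a b; fin_cases a <;> fin_cases b <;> simp [V, hB]
          · simp [V]
      intro j
      refine Fin.lastCases ?_ (fun j => ?_) j
      · rw [hXl]; ext a b; fin_cases a <;> fin_cases b <;> simp [X3]
      · rw [hXc]; exact hV j
    · intro j
      refine Fin.cases ?_ (fun j => ?_) j
      · apply psd2_of <;> simp [V, hA]; linarith [(Nat.cast_nonneg m : (0 : ℝ) ≤ m)]
      · refine Fin.cases ?_ (fun j => ?_) j
        · apply psd2_of <;> simp [V, hB]; linarith [(Nat.cast_nonneg m : (0 : ℝ) ≤ m)]
        · simp only [V, Fin.cons_succ, sub_self]; exact Matrix.PosSemidef.zero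
    · rw [hVs]; exact Matrix.PosSemidef.zero
    · apply psd2_of <;> simp [X3]
      · linarith [Real.neg_one_le_cos θ]
      · linarith [Real.cos_le_one θ]
      · nlinarith [Real.sin_sq_add_cos_sq θ]
    · apply psd2_of <;> simp [X3]
      · linarith [Real.cos_le_one θ]
      · linarith [Real.neg_one_le_cos θ]
      · nlinarith [Real.sin_sq_add_cos_sq θ]
  obtain ⟨s, x, P, h1, hx, hP, hPs, hXe⟩ := h X hlev
  let ι : Fin 3 → Fin (m + 2 + 1) := ![Fin.castSucc 0, Fin.castSucc 1, Fin.last _]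
  refine ⟨s, fun i j => x i (ι j), P, h1, ?_, hP, hPs, ?_⟩
  · intro i
    obtain ⟨y, hy, hyx⟩ := Set.mem_smul_set.1 (hx i)
    refine Set.mem_smul_set.2 ⟨fun j => y (ι j), ?_, ?_⟩
    · rw [mem_level1_A] at hy
      obtain ⟨y1, y2, y3, y4⟩ := hy
      rw [mem_level1_S _ hk]
      refine ⟨y1 0, y1 1, ?_, y3, y4⟩
      rw [Fin.sum_univ_succ, Fin.sum_univ_succ] at y2
      have : ∑ i : Fin m, y (i.succ.succ).castSucc ≤ ∑ i : Fin m, (1 : ℝ) :=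
        Finset.sum_le_sum fun i _ => y1 _
      simp only [Finset.sum_const, Finset.card_univ, Fintype.card_fin, nsmul_eq_mul, mul_one] at this
      have e1 : y (ι 0) = y (Fin.castSucc 0) := rfl
      have e2 : y (ι 1) = y (Fin.castSucc (Fin.succ 0)) := rfl
      simp only [e1, e2]
      push_cast
      linarith
    · funext j
      change γ * y (ι j) = x i (ι j)
      rw [← hyx]; rfl
  · intro j
    fin_cases j
    · have := hXe (Fin.castSucc 0)
      rw [hXc] at this
      exact this
    · have := hXe (Fin.castSucc 1)
      rw [hXc] at this
      exact this
    · have := hXe (Fin.last _)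
      rw [hXl] at this
      exact this

/-- For `k ≥ 3` and any `γ ∈ ℝ`, the membership of the triples
`(diag(1,−k), diag(−k,1), X_3(θ))` (for all `θ ∈ [0,π/2]`) in level 2 of `γ·W^min(D_S^ℝ(1))`
is equivalent to `D_{A(k)}^ℝ(2) ⊆` level 2 of `γ·W^min(D_{A(k)}^ℝ(1))`. -/
theorem stmt_4 (k : ℕ) (hk : 3 ≤ k) (γ : ℝ) :
    (∀ θ ∈ Set.Icc (0 : ℝ) (Real.pi / 2),
        memWmin (γ • level1 (Smat k))
          (fun j : Fin 3 =>
            if j = 0 then !![(1 : ℝ), 0; 0, -(k : ℝ)]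
            else if j = 1 then !![-(k : ℝ), 0; 0, 1]
            else X3 θ)) ↔
    ∀ X : Fin (k + 1) → Matrix (Fin 2) (Fin 2) ℝ,
      memLevel (Amat k) X → memWmin (γ • level1 (Amat k)) X := by
  constructor
  · intro h
    obtain ⟨t, ht, t1, t2, hm⟩ := nec k hk γ (h (Real.pi / 2) ⟨by positivity, le_rfl⟩)
    exact suff k hk γ t ht t1 t2 hm
  · intro h θ _
    exact conv_dir k hk γ θ h
end

section
/- Let ω = e^{2πi/3} and define complex Hermitian 2×2 matrices X_1 = diag(1,−1), X_2 = [[0,1],[1,0]], X_3 = [[0, ω],[conj(ω), 0]], X_4 = [[0, conj(ω)],[ω, 0]], and Y_1 = diag(−2/√13, 2/√13), Y_2 = (−3/(2√13))·[[0,1],[1,0]], Y_3 = (−3/(2√13))·[[0, ω],[conj(ω), 0]], Y_4 = (−3/(2√13))·[[0, conj(ω)],[ω, 0]]. Then: (i) −I_2 ≼ X_i ≼ I_2 for each i, so (X_1,X_2,X_3,X_4) lies in level 2 of the matrix cube in four variables; (ii) Σ_{i=1}^4 ε_i Y_i ≼ I_2 for every sign vector ε ∈ {±1}^4, so (Y_1,Y_2,Y_3,Y_4)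 lies in level 2 of the matrix diamond in four variables; and (iii) λ_max(Σ_{i=1}^4 X_i ⊗ Y_i) = √13/2. Consequently, the maximum of λ_max(Σ_{i=1}^4 X_i ⊗ Y_i) over all tuples X in level 2 of the matrix cube and Y in level 2 of the matrix diamond is at least √13/2. -/
open Matrix
open scoped Kronecker ComplexOrder

/-- The largest eigenvalue of a (Hermitian) complex matrix, as the supremum of its
real eigenvalues. -/
noncomputable def lambdaMaxC {m : Type*} [Fintype m] (M : Matrix m m ℂ) : ℝ :=
  sSup {t : ℝ | ∃ v : m → ℂ, v ≠ 0 ∧ M.mulVec v = (t : ℂ) • v}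

/-- `ω = e^{2πi/3}`. -/
noncomputable def ω : ℂ := Complex.exp (2 * Real.pi * Complex.I / 3)

/-- Membership in level 2 of the matrix cube in four variables. -/
def inCube2 (X : Fin 4 → Matrix (Fin 2) (Fin 2) ℂ) : Prop :=
  ∀ i, (X i).IsHermitian ∧ ((1 : Matrix (Fin 2) (Fin 2) ℂ) - X i).PosSemidef ∧
    ((1 : Matrix (Fin 2) (Fin 2) ℂ) + X i).PosSemidef

/-- Membership in level 2 of the matrix diamond in four variables. -/
def inDiamond2 (Y : Fin 4 → Matrix (Fin 2) (Fin 2) ℂ) : Prop :=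
  (∀ i, (Y i).IsHermitian) ∧
    ∀ ε : Fin 4 → ℝ, (∀ i, ε i = 1 ∨ ε i = -1) →
      ((1 : Matrix (Fin 2) (Fin 2) ℂ) - ∑ i, ε i • Y i).PosSemidef

/-- `X_1 = diag(1,−1)`, `X_2 = [[0,1],[1,0]]`, `X_3 = [[0,ω],[ω̄,0]]`, `X_4 = [[0,ω̄],[ω,0]]`. -/
noncomputable def X5 : Fin 4 → Matrix (Fin 2) (Fin 2) ℂ
  | 0 => !![1, 0; 0, -1]
  | 1 => !![0, 1; 1, 0]
  | 2 => !![0, ω; starRingEnd ℂ ω, 0]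
  | 3 => !![0, starRingEnd ℂ ω; ω, 0]

/-- `Y_1 = diag(−2/√13, 2/√13)`, `Y_2 = (−3/(2√13))·[[0,1],[1,0]]`, etc. -/
noncomputable def Y5 : Fin 4 → Matrix (Fin 2) (Fin 2) ℂ
  | 0 => !![((-2 / Real.sqrt 13 : ℝ) : ℂ), 0; 0, ((2 / Real.sqrt 13 : ℝ) : ℂ)]
  | 1 => (-3 / (2 * Real.sqrt 13) : ℝ) • !![0, 1; 1, 0]
  | 2 => (-3 / (2 * Real.sqrt 13) : ℝ) • !![0, ω; starRingEnd ℂ ω, 0]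
  | 3 => (-3 / (2 * Real.sqrt 13) : ℝ) • !![0, starRingEnd ℂ ω; ω, 0]

lemma w_eq : ω = ⟨-1/2, √3/2⟩ := by
  have h : (2 * Real.pi * Complex.I / 3 : ℂ) = ((Real.pi - Real.pi/3 : ℝ) : ℂ) * Complex.I := by
    push_cast; ring
  unfold ω
  rw [h, Complex.exp_mul_I, ← Complex.ofReal_cos, ← Complex.ofReal_sin, Real.cos_pi_sub,
    Real.sin_pi_sub, Real.cos_pi_div_three, Real.sin_pi_div_three]
  apply Complex.ext <;> simp
  norm_num

lemma psd_aux_s5 (a : ℝ) (b : ℂ) (h : a^2 + Complex.normSq b ≤ 1) :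
    ((1 : Matrix (Fin 2) (Fin 2) ℂ) - !![(a:ℂ), b; starRingEnd ℂ b, -(a:ℂ)]).PosSemidef := by
  set A : Matrix (Fin 2) (Fin 2) ℂ := !![(a:ℂ), b; starRingEnd ℂ b, -(a:ℂ)] with hA
  have hH : A.IsHermitian := by
    ext i j; fin_cases i <;> fin_cases j <;> simp [hA]
  have h2 : A * A = ((a^2 + Complex.normSq b : ℝ) : ℂ) • (1 : Matrix (Fin 2) (Fin 2) ℂ) := by
    ext i j
    fin_cases i <;> fin_cases j <;>
      simp [hA, Matrix.mul_apply, Fin.sum_univ_two, Complex.normSq_eq_conj_mul_self] <;> ring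
  have key : 1 - A = ((1/2 : ℝ) : ℂ) • ((1 - A)ᴴ * (1 - A) +
      ((1 - (a^2 + Complex.normSq b) : ℝ) : ℂ) • (1 : Matrix (Fin 2) (Fin 2) ℂ)) := by
    have : (1 - A)ᴴ = 1 - A := by rw [conjTranspose_sub, hH.eq, conjTranspose_one]
    rw [this, sub_mul, mul_sub, mul_sub, h2]
    ext i j
    simp
    ring
  rw [key]
  apply PosSemidef.smul _ (by exact_mod_cast (by norm_num : (0:ℝ) ≤ 1/2))
  apply PosSemidef.add (posSemidef_conjTranspose_mul_self _)
  apply PosSemidef.smul PosSemidef.one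
  exact_mod_cast (by linarith : (0:ℝ) ≤ 1 - (a^2 + Complex.normSq b))

lemma psd_of_eq (M : Matrix (Fin 2) (Fin 2) ℂ) (a : ℝ) (b : ℂ) (h : a^2 + Complex.normSq b ≤ 1)
    (e : M = !![(a:ℂ), b; starRingEnd ℂ b, -(a:ℂ)]) : (1 - M).PosSemidef := by
  rw [e]; exact psd_aux_s5 a b h

lemma s3 : √3 * √3 = 3 := Real.mul_self_sqrt (by norm_num)
lemma s13 : √13 * √13 = 13 := Real.mul_self_sqrt (by norm_num)
lemma p13 : 0 < √13 := Real.sqrt_pos.2 (by norm_num)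

lemma nw : Complex.normSq ω = 1 := by
  rw [w_eq, Complex.normSq_mk]; have := s3; nlinarith

lemma X_herm (i : Fin 4) : (X5 i).IsHermitian := by
  fin_cases i <;> ext k l <;> fin_cases k <;> fin_cases l <;> simp [X5]

lemma Y_herm (i : Fin 4) : (Y5 i).IsHermitian := by
  fin_cases i <;> ext k l <;> fin_cases k <;> fin_cases l <;> simp [Y5]

lemma X_cube : inCube2 X5 := by
  intro i
  refine ⟨X_herm i, ?_, ?_⟩
  · fin_cases i
    · refine psd_of_eq _ 1 0 (by simp) (by simp [X5])
    · refine psd_of_eq _ 0 1 (by simp) (by simp [X5])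
    · refine psd_of_eq _ 0 ω (by simp [nw]) (by simp [X5])
    · refine psd_of_eq _ 0 (starRingEnd ℂ ω) (by simp [nw]) (by simp [X5])
  · rw [← sub_neg_eq_add]
    fin_cases i
    · refine psd_of_eq _ (-1) 0 (by simp) (by simp [X5])
    · refine psd_of_eq _ 0 (-1) (by simp) (by simp [X5])
    · refine psd_of_eq _ 0 (-ω) (by simp [nw]) (by simp [X5])
    · refine psd_of_eq _ 0 (-starRingEnd ℂ ω) (by simp [nw]) (by simp [X5])

lemma Y_diamond : inDiamond2 Y5 := by
  refine ⟨Y_herm, fun ε hε => ?_⟩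
  refine psd_of_eq _ (ε 0 * (-2 / √13))
    (((-3 / (2 * √13) : ℝ) : ℂ) * (ε 1 + ε 2 * ω + ε 3 * starRingEnd ℂ ω)) ?_ ?_
  · rw [Complex.normSq_mul, Complex.normSq_ofReal, w_eq]
    have e : Complex.normSq ((ε 1 : ℂ) + ε 2 * ⟨-1/2, √3/2⟩ + ε 3 * starRingEnd ℂ ⟨-1/2, √3/2⟩)
        = (ε 1 - ε 2 / 2 - ε 3 / 2)^2 + 3/4 * (ε 2 - ε 3)^2 := by
      simp [Complex.normSq_apply]
      linear_combination (ε 2 - ε 3)^2 / 4 * s3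
    rw [e]
    have h1 : (ε 0 * (-2 / √13))^2 = 4/13 * (ε 0)^2 := by
      have := p13.ne'
      field_simp
      rw [Real.sq_sqrt (by norm_num)]; ring
    have h2 : (-3 / (2 * √13)) * (-3 / (2 * √13)) = 9/52 := by
      have := p13.ne'
      field_simp
      rw [Real.sq_sqrt (by norm_num)]; ring
    rw [h1, h2]
    rcases hε 0 with h0 | h0 <;> rcases hε 1 with h1 | h1 <;> rcases hε 2 with h2 | h2 <;>
      rcases hε 3 with h3 | h3 <;> rw [h0, h1, h2, h3] <;> norm_num
  · have k2 : starRingEnd ℂ 2 = 2 := map_ofNat _ 2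
    have k3 : starRingEnd ℂ 3 = 3 := map_ofNat _ 3
    ext i j
    fin_cases i <;> fin_cases j <;> simp [Y5, Fin.sum_univ_four, k2, k3] <;> ring

lemma wsum : 1 + ω * ω + starRingEnd ℂ ω * starRingEnd ℂ ω = 0 := by
  have := s3
  rw [w_eq]; apply Complex.ext <;> simp <;> linarith

lemma wconj : ω * starRingEnd ℂ ω = 1 := by
  rw [Complex.mul_conj, nw]; simp

lemma lam_eq : lambdaMaxC (∑ i, X5 i ⊗ₖ Y5 i) = √13 / 2 := by
  have hp := p13
  have hs := s13
  have hpc : (√13 : ℂ) ≠ 0 := by exact_mod_cast hp.ne'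
  have hsc : (√13 : ℂ) * √13 = 13 := by exact_mod_cast hs
  have hi : 1 / √13 = √13 / 13 := by field_simp; rw [Real.sq_sqrt (by norm_num)]
  have hic : (√13 : ℂ)⁻¹ = √13 / 13 := by rw [inv_eq_one_div]; exact_mod_cast congrArg (fun x : ℝ => (x : ℂ)) hi
  have ww := wsum
  have wc := wconj
  have M00 : ∀ v : Fin 2 × Fin 2 → ℂ, ((∑ i, X5 i ⊗ₖ Y5 i).mulVec v) (0,0)
      = -2/13 * √13 * v (0,0) := by
    intro v
    simp [Matrix.mulVec, dotProduct, Fintype.sum_prod_type, Fin.sum_univ_four, X5, Y5, div_eq_mul_inv, hic]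
    linear_combination (-3/26 * √13 * v (1,1)) * ww
  have M11 : ∀ v : Fin 2 × Fin 2 → ℂ, ((∑ i, X5 i ⊗ₖ Y5 i).mulVec v) (1,1)
      = -2/13 * √13 * v (1,1) := by
    intro v
    simp [Matrix.mulVec, dotProduct, Fintype.sum_prod_type, Fin.sum_univ_four, X5, Y5, div_eq_mul_inv, hic]
    linear_combination (-3/26 * √13 * v (0,0)) * ww
  have M01 : ∀ v : Fin 2 × Fin 2 → ℂ, ((∑ i, X5 i ⊗ₖ Y5 i).mulVec v) (0,1)
      = 2/13 * √13 * v (0,1) - 9/26 * √13 * v (1,0) := by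
    intro v
    simp [Matrix.mulVec, dotProduct, Fintype.sum_prod_type, Fin.sum_univ_four, X5, Y5, div_eq_mul_inv, hic]
    linear_combination (-6/26 * √13 * v (1,0)) * wc
  have M10 : ∀ v : Fin 2 × Fin 2 → ℂ, ((∑ i, X5 i ⊗ₖ Y5 i).mulVec v) (1,0)
      = 2/13 * √13 * v (1,0) - 9/26 * √13 * v (0,1) := by
    intro v
    simp [Matrix.mulVec, dotProduct, Fintype.sum_prod_type, Fin.sum_univ_four, X5, Y5, div_eq_mul_inv, hic]
    linear_combination (-6/26 * √13 * v (0,1)) * wc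
  generalize (∑ i, X5 i ⊗ₖ Y5 i) = M at *
  apply IsGreatest.csSup_eq
  constructor
  · refine ⟨fun p => if p = (0,1) then 1 else if p = (1,0) then -1 else 0, ?_, ?_⟩
    · intro h; simpa using congrFun h (0,1)
    · ext ⟨i, j⟩
      fin_cases i <;> fin_cases j <;> simp [M00, M01, M10, M11] <;> ring
  · rintro t ⟨v, hv, h⟩
    by_contra! hlt
    apply hv
    have e00 := (M00 v).symm.trans (congrFun h (0,0))
    have e01 := (M01 v).symm.trans (congrFun h (0,1))
    have e10 := (M10 v).symm.trans (congrFun h (1,0))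
    have e11 := (M11 v).symm.trans (congrFun h (1,1))
    simp only [Pi.smul_apply, smul_eq_mul] at e00 e01 e10 e11
    have c1 : (t + 2/13 * √13 : ℂ) ≠ 0 := by
      have : t + 2/13 * √13 ≠ 0 := by linarith
      intro h0; apply this; apply Complex.ofReal_injective; push_cast; exact h0
    have c2 : (t - 1/2 * √13 : ℂ) ≠ 0 := by
      have : t - 1/2 * √13 ≠ 0 := by intro; linarith
      intro h0; apply this; apply Complex.ofReal_injective; push_cast; exact h0
    have c3 : (t + 5/26 * √13 : ℂ) ≠ 0 := by
      have : t + 5/26 * √13 ≠ 0 := by linarith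
      intro h0; apply this; apply Complex.ofReal_injective; push_cast; exact h0
    have z00 : v (0,0) = 0 := (mul_eq_zero.1 (by linear_combination -e00 :
      (t + 2/13 * √13 : ℂ) * v (0,0) = 0)).resolve_left c1
    have z11 : v (1,1) = 0 := (mul_eq_zero.1 (by linear_combination -e11 :
      (t + 2/13 * √13 : ℂ) * v (1,1) = 0)).resolve_left c1
    have zm : v (0,1) - v (1,0) = 0 := (mul_eq_zero.1 (by linear_combination e10 - e01 :
      (t - 1/2 * √13 : ℂ) * (v (0,1) - v (1,0)) = 0)).resolve_left c2
    have zp : v (0,1) + v (1,0) = 0 := (mul_eq_zero.1 (by linear_combination -e10 - e01 :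
      (t + 5/26 * √13 : ℂ) * (v (0,1) + v (1,0)) = 0)).resolve_left c3
    ext ⟨i, j⟩
    fin_cases i <;> fin_cases j <;> simp only [Pi.zero_apply]
    · exact z00
    · show v (0,1) = 0
      linear_combination (zm + zp)/2
    · show v (1,0) = 0
      linear_combination (zp - zm)/2
    · exact z11

lemma entry_bound (A : Matrix (Fin 2) (Fin 2) ℂ) (hA : A.IsHermitian)
    (h1 : (1 - A).PosSemidef) (h2 : (1 + A).PosSemidef) (i j : Fin 2) : ‖A i j‖ ≤ 2 := by
  have d1 := fun i => h1.diag_nonneg (i := i)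
  have d2 := fun i => h2.diag_nonneg (i := i)
  have dt := h1.det_nonneg
  rw [Matrix.det_fin_two] at dt
  have hij : A 1 0 = starRingEnd ℂ (A 0 1) := (hA.apply 1 0).symm
  have im : ∀ i, (A i i).im = 0 := fun i => Complex.conj_eq_iff_im.1 (hA.apply i i)
  have b1 : ∀ i, (A i i).re ≤ 1 := fun i => by
    have := (Complex.le_def.1 (d1 i)).1; simp at this; linarith
  have b2 : ∀ i, -1 ≤ (A i i).re := fun i => by
    have := (Complex.le_def.1 (d2 i)).1; simp at this; linarith
  have hd : ∀ i, ‖A i i‖ ≤ 2 := fun i => by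
    have := Complex.norm_le_abs_re_add_abs_im (A i i)
    rw [im i] at this
    have h3 := abs_le.2 ⟨b2 i, b1 i⟩
    simp at this; linarith
  have ho : ‖A 0 1‖ ≤ 2 := by
    have h := (Complex.le_def.1 dt).1
    simp [hij, im] at h
    have n := Complex.sq_norm (A 0 1)
    rw [Complex.normSq_apply] at n
    have := b1 0; have := b1 1; have := b2 0; have := b2 1
    have : (1 - (A 0 0).re) * (1 - (A 1 1).re) ≤ 2 * 2 := by gcongr <;> linarith
    nlinarith [norm_nonneg (A 0 1)]
  fin_cases i <;> fin_cases j
  · exact hd 0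
  · exact ho
  · show ‖A 1 0‖ ≤ 2
    rw [hij, RCLike.norm_conj]; exact ho
  · exact hd 1

lemma diamond_half (Y : Fin 4 → Matrix (Fin 2) (Fin 2) ℂ) (hY : inDiamond2 Y) (i : Fin 4)
    (s : ℝ) (hs : s = 1 ∨ s = -1) : (1 - s • Y i).PosSemidef := by
  have a := hY.2 (fun j => if j = i then s else 1) (fun j => by split_ifs <;> simp [hs])
  have b := hY.2 (fun j => if j = i then s else -1) (fun j => by split_ifs <;> simp [hs])
  have c := (a.add b).smul (a := ((1/2 : ℝ) : ℂ)) (by exact_mod_cast (by norm_num : (0:ℝ) ≤ 1/2))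
  convert c using 1
  ext k l
  fin_cases i <;> simp [Fin.sum_univ_four] <;> ring

lemma lam_bound (X Y : Fin 4 → Matrix (Fin 2) (Fin 2) ℂ) (hX : inCube2 X) (hY : inDiamond2 Y) :
    lambdaMaxC (∑ i, X i ⊗ₖ Y i) ≤ 64 := by
  have bX : ∀ i k l, ‖X i k l‖ ≤ 2 := fun i => entry_bound _ (hX i).1 (hX i).2.1 (hX i).2.2
  have bY : ∀ i k l, ‖Y i k l‖ ≤ 2 := fun i => entry_bound _ (hY.1 i)
    (by simpa using diamond_half Y hY i 1 (by simp))
    (by simpa using diamond_half Y hY i (-1) (by simp))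
  have bM : ∀ p q, ‖(∑ i, X i ⊗ₖ Y i) p q‖ ≤ 16 := fun p q => by
    rw [Matrix.sum_apply]
    calc _ ≤ ∑ i : Fin 4, (2 * 2 : ℝ) := norm_sum_le_of_le _ fun i _ => by
          rw [Matrix.kroneckerMap_apply, norm_mul]
          exact mul_le_mul (bX _ _ _) (bY _ _ _) (norm_nonneg _) (by norm_num)
      _ = 16 := by norm_num
  apply Real.sSup_le _ (by norm_num)
  rintro t ⟨v, hv, h⟩
  have hvn : 0 < ‖v‖ := norm_pos_iff.2 hv
  have : ‖(t : ℂ) • v‖ ≤ 64 * ‖v‖ := by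
    rw [← h, pi_norm_le_iff_of_nonneg (by positivity)]
    intro p
    calc ‖∑ q, (∑ i, X i ⊗ₖ Y i) p q * v q‖ ≤ ∑ q : Fin 2 × Fin 2, 16 * ‖v‖ :=
          norm_sum_le_of_le _ fun q _ => by
          rw [norm_mul]
          exact mul_le_mul (bM _ _) (norm_le_pi_norm v q) (norm_nonneg _) (by norm_num)
      _ = 64 * ‖v‖ := by simp; ring
  rw [norm_smul, Complex.norm_real] at this
  exact (le_abs_self t).trans (le_of_mul_le_mul_right this hvn)

/-- The tuples `X5`, `Y5` lie in level 2 of the matrix cube, resp. matrix diamond, in four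
variables, satisfy `λ_max(Σ_i X_i ⊗ Y_i) = √13/2`, and consequently the supremum of
`λ_max(Σ_i X_i ⊗ Y_i)` over such tuples is at least `√13/2`. -/
theorem stmt_5 :
    inCube2 X5 ∧ inDiamond2 Y5 ∧
    lambdaMaxC (∑ i, X5 i ⊗ₖ Y5 i) = Real.sqrt 13 / 2 ∧
    Real.sqrt 13 / 2 ≤
      sSup {t : ℝ | ∃ X Y, inCube2 X ∧ inDiamond2 Y ∧
        t = lambdaMaxC (∑ i, X i ⊗ₖ Y i)} := by
  refine ⟨X_cube, Y_diamond, lam_eq, ?_⟩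
  apply le_csSup
  · refine ⟨64, ?_⟩
    rintro t ⟨X, Y, hX, hY, rfl⟩
    exact lam_bound X Y hX hY
  · exact ⟨X5, Y5, X_cube, Y_diamond, lam_eq.symm⟩
end

section
/- Let A = (A_1,…,A_g) and B = (B_1,…,B_g) be g-tuples of real symmetric matrices (of sizes d_A×d_A and d_B×d_B, respectively). Then for every integer n ≥ 1: (i) D_A^ℝ(2n) ⊆ D_B^ℝ(2n) implies D_A^ℂ(n) ⊆ D_B^ℂ(n); (ii) D_A^ℂ(n) ⊆ D_B^ℂ(n) implies D_A^ℝ(n) ⊆ D_B^ℝ(n). In particular, D_A^ℂ(n) ⊆ D_B^ℂ(n) holds for all n ≥ 1 if and only if D_A^ℝ(n) ⊆ D_B^ℝ(n) holds for all n ≥ 1. -/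
open Matrix
open scoped Kronecker ComplexOrder

/-- The `n`-th level of the complex free spectrahedron determined by a real tuple `A`. -/
def DC {g d : ℕ} (A : Fin g → Matrix (Fin d) (Fin d) ℝ) (n : ℕ) :
    Set (Fin g → Matrix (Fin n) (Fin n) ℂ) :=
  {X | (∀ i, (X i).IsHermitian) ∧
    ((1 : Matrix (Fin d × Fin n) (Fin d × Fin n) ℂ)
      - ∑ i, (A i).map (Complex.ofReal) ⊗ₖ X i).PosSemidef}

/-- The `n`-th level of the real free spectrahedron determined by a real tuple `A`. -/
def DR {g d : ℕ} (A : Fin g → Matrix (Fin d) (Fin d) ℝ) (n : ℕ) :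
    Set (Fin g → Matrix (Fin n) (Fin n) ℝ) :=
  {X | (∀ i, (X i).IsSymm) ∧
    ((1 : Matrix (Fin d × Fin n) (Fin d × Fin n) ℝ) - ∑ i, A i ⊗ₖ X i).PosSemidef}

/-- Realification of a complex matrix. -/
noncomputable def rz {ι : Type*} (M : Matrix ι ι ℂ) : Matrix (ι ⊕ ι) (ι ⊕ ι) ℝ :=
  fromBlocks (M.map Complex.re) (-(M.map Complex.im)) (M.map Complex.im) (M.map Complex.re)

theorem herm_rz {ι : Type*} (M : Matrix ι ι ℂ) : (rz M).IsHermitian ↔ M.IsHermitian := by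
  constructor
  · intro h
    ext i j
    have h1 := h.apply (Sum.inl i) (Sum.inl j)
    have h2 := h.apply (Sum.inl i) (Sum.inr j)
    simp [rz] at h1 h2
    apply Complex.ext <;> simp
    · linarith
    · linarith
  · intro h
    ext i j
    rcases i with i | i <;> rcases j with j | j <;>
      · have h0 := h.apply i j
        have h1 := congrArg Complex.re h0
        have h2 := congrArg Complex.im h0
        simp [rz] at h1 h2 ⊢
        linarith

theorem quad_rz {ι : Type*} [Fintype ι] (M : Matrix ι ι ℂ) (u v : ι → ℝ) :
    (star (Sum.elim u v) ⬝ᵥ (rz M *ᵥ Sum.elim u v)) =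
      (star (fun i => (⟨u i, v i⟩ : ℂ)) ⬝ᵥ (M *ᵥ (fun i => (⟨u i, v i⟩ : ℂ)))).re := by
  simp only [dotProduct, mulVec, rz, Fintype.sum_sum_type, Complex.re_sum, Pi.star_apply,
    Sum.elim_inl, Sum.elim_inr, fromBlocks_apply₁₁, fromBlocks_apply₁₂, fromBlocks_apply₂₁,
    fromBlocks_apply₂₂, Finset.mul_sum, ← Finset.sum_add_distrib, mul_add]
  refine Finset.sum_congr rfl fun i _ => Finset.sum_congr rfl fun j _ => ?_
  simp
  ring

theorem psd_rz {ι : Type*} [Fintype ι] (M : Matrix ι ι ℂ) :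
    (rz M).PosSemidef ↔ M.PosSemidef := by
  rw [posSemidef_iff_dotProduct_mulVec, posSemidef_iff_dotProduct_mulVec, herm_rz]
  refine and_congr_right fun hM => ⟨fun h x => ?_, fun h x => ?_⟩
  · have := h (Sum.elim (fun i => (x i).re) (fun i => (x i).im))
    rw [quad_rz] at this
    rw [Complex.nonneg_iff]
    exact ⟨this, (hM.im_star_dotProduct_mulVec_self x).symm⟩
  · have := h (fun i => ⟨x (Sum.inl i), x (Sum.inr i)⟩)
    rw [Complex.nonneg_iff] at this
    have h2 := quad_rz M (x ∘ Sum.inl) (x ∘ Sum.inr)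
    rw [Sum.elim_comp_inl_inr] at h2
    rw [h2]
    exact this.1

theorem psd_ofReal {ι : Type*} [Fintype ι] (M : Matrix ι ι ℝ) :
    (M.map Complex.ofReal).PosSemidef ↔ M.PosSemidef := by
  rw [← psd_rz]
  constructor
  · intro h
    have := h.submatrix (Sum.inl : ι → ι ⊕ ι)
    convert this using 1
    ext i j
    simp [rz]
  · intro h
    rw [posSemidef_iff_dotProduct_mulVec] at h ⊢
    refine ⟨?_, fun x => ?_⟩
    · rw [herm_rz]
      ext i j
      simpa using h.1.apply i j
    · have h1 := h.2 (x ∘ Sum.inl)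
      have h2 := h.2 (x ∘ Sum.inr)
      convert add_nonneg h1 h2 using 1
      simp [dotProduct, mulVec, rz]

/-- index equivalence -/
def ee (n : ℕ) : Fin (2 * n) ≃ Fin n ⊕ Fin n :=
  (finCongr (two_mul n)).trans finSumFinEquiv.symm

theorem mem_DR_iff {g d n : ℕ} (A : Fin g → Matrix (Fin d) (Fin d) ℝ)
    (X : Fin g → Matrix (Fin n) (Fin n) ℂ) :
    (fun i => (rz (X i)).submatrix (ee n) (ee n)) ∈ DR A (2 * n) ↔ X ∈ DC A n := by
  unfold DR DC
  refine and_congr (forall_congr' fun i => ?_) ?_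
  · rw [← herm_rz, ← isHermitian_submatrix_equiv (ee n)]
    simp [IsHermitian, IsSymm, conjTranspose_eq_transpose_of_trivial]
  · rw [← psd_rz, ← posSemidef_submatrix_equiv
      (((Equiv.refl (Fin d)).prodCongr (ee n)).trans (Equiv.prodSumDistrib _ _ _))]
    refine Eq.to_iff (congrArg _ ?_)
    ext ⟨a, i⟩ ⟨b, j⟩
    have e1 : (1 : Matrix (Fin d × Fin (2*n)) (Fin d × Fin (2*n)) ℝ) (a, i) (b, j) =
      (1 : Matrix (Fin d × (Fin n ⊕ Fin n)) (Fin d × (Fin n ⊕ Fin n)) ℝ) (a, ee n i) (b, ee n j) := by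
      simp [one_apply]
    simp only [Matrix.sub_apply, e1, Matrix.sum_apply, kroneckerMap_apply, submatrix_apply,
      Equiv.trans_apply, Equiv.prodCongr_apply, Prod.map, Equiv.refl_apply]
    rcases ee n i with i | i <;> rcases ee n j with j | j <;>
      simp [rz, Matrix.sum_apply, one_apply, apply_ite]

theorem mem_DC_iff {g d n : ℕ} (A : Fin g → Matrix (Fin d) (Fin d) ℝ)
    (X : Fin g → Matrix (Fin n) (Fin n) ℝ) :
    (fun i => (X i).map Complex.ofReal) ∈ DC A n ↔ X ∈ DR A n := by
  unfold DR DC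
  refine and_congr (forall_congr' fun i => ?_) ?_
  · simp only [IsHermitian, IsSymm, ← Matrix.ext_iff]
    simp
  · rw [← psd_ofReal]
    refine Eq.to_iff (congrArg _ ?_)
    ext a b
    simp [Matrix.sum_apply, one_apply, apply_ite]

/-- For `g`-tuples `A`, `B` of real symmetric matrices and every `n ≥ 1`:
`D_A^ℝ(2n) ⊆ D_B^ℝ(2n)` implies `D_A^ℂ(n) ⊆ D_B^ℂ(n)`, which implies
`D_A^ℝ(n) ⊆ D_B^ℝ(n)`.  In particular the complex inclusions hold at all levels iff the
real inclusions hold at all levels. -/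
theorem stmt_8 {g dA dB : ℕ}
    (A : Fin g → Matrix (Fin dA) (Fin dA) ℝ) (B : Fin g → Matrix (Fin dB) (Fin dB) ℝ)
    (hA : ∀ i, (A i).IsSymm) (hB : ∀ i, (B i).IsSymm) :
    (∀ n : ℕ, 1 ≤ n →
      ((DR A (2 * n) ⊆ DR B (2 * n) → DC A n ⊆ DC B n) ∧
       (DC A n ⊆ DC B n → DR A n ⊆ DR B n))) ∧
    ((∀ n : ℕ, 1 ≤ n → DC A n ⊆ DC B n) ↔ (∀ n : ℕ, 1 ≤ n → DR A n ⊆ DR B n)) := by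
  have h1 : ∀ n : ℕ, DR A (2 * n) ⊆ DR B (2 * n) → DC A n ⊆ DC B n := fun n h X hX =>
    (mem_DR_iff B X).1 (h ((mem_DR_iff A X).2 hX))
  have h2 : ∀ n : ℕ, DC A n ⊆ DC B n → DR A n ⊆ DR B n := fun n h X hX =>
    (mem_DC_iff B X).1 (h ((mem_DC_iff A X).2 hX))
  exact ⟨fun n _ => ⟨h1 n, h2 n⟩, fun h n hn => h2 n (h n hn),
    fun h n hn => h1 n (h (2 * n) (by omega))⟩
end

section
/- Let D_A and D_B be bounded free spectrahedra (in g and h variables, over ℂ) and let (X, Y) ∈ (D_A × D_B)(n). Then: (i) (X, Y) is an Arveson extreme point of the free spectrahedron D_A × D_B if and only if X is an Arveson extreme point of D_A and Y is an Arveson extreme point of D_B; and (ii) (X, Y) is a Euclidean extreme point of the convex set (D_A × D_B)(n) if and only if X is an extreme point of D_A(n) and Y is an extreme point of D_B(n). -/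
open Matrix
open scoped Kronecker ComplexOrder

/-- Membership in the level of the free spectrahedron determined by the Hermitian tuple `A`,
at matrix size given by the index type `m`: all coordinates are Hermitian and
`I − Σ_i A_i ⊗ X_i ⪰ 0`. -/
def memD {ι : Type*} [Fintype ι] {d : Type*} [Fintype d] [DecidableEq d]
    {m : Type*} [Fintype m] [DecidableEq m]
    (A : ι → Matrix d d ℂ) (X : ι → Matrix m m ℂ) : Prop :=
  (∀ i, (X i).IsHermitian) ∧
    ((1 : Matrix (d × m) (d × m) ℂ) - ∑ i, A i ⊗ₖ X i).PosSemidef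

/-- Boundedness of a free spectrahedron: every level is a bounded set. -/
def BoundedD {ι : Type*} [Fintype ι] {d : Type*} [Fintype d] [DecidableEq d]
    (A : ι → Matrix d d ℂ) : Prop :=
  ∀ n : ℕ, ∃ C : ℝ, ∀ X : ι → Matrix (Fin n) (Fin n) ℂ,
    memD A X → ∀ i p q, ‖X i p q‖ ≤ C

/-- `Z` is an Arveson extreme point of `D_A`: any dilation of `Z` inside `D_A` is trivial. -/
def IsArvesonExtreme {ι : Type*} [Fintype ι] {d : Type*} [Fintype d] [DecidableEq d]
    {m : Type*} [Fintype m] [DecidableEq m]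
    (A : ι → Matrix d d ℂ) (Z : ι → Matrix m m ℂ) : Prop :=
  memD A Z ∧
    ∀ r : ℕ, 1 ≤ r →
      ∀ (β : ι → Matrix m (Fin r) ℂ) (γ : ι → Matrix (Fin r) (Fin r) ℂ),
        (∀ i, (γ i).IsHermitian) →
        memD A (fun i => Matrix.fromBlocks (Z i) (β i) (β i)ᴴ (γ i)) → β = 0

/-- The defining tuple of the Cartesian product `D_A × D_B`:
`(A_1⊕0, …, A_g⊕0, 0⊕B_1, …, 0⊕B_h)`. -/
def prodTuple {g h dA dB : ℕ}
    (A : Fin g → Matrix (Fin dA) (Fin dA) ℂ) (B : Fin h → Matrix (Fin dB) (Fin dB) ℂ) :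
    Fin g ⊕ Fin h → Matrix (Fin dA ⊕ Fin dB) (Fin dA ⊕ Fin dB) ℂ :=
  Sum.elim (fun i => Matrix.fromBlocks (A i) 0 0 0)
    (fun i => Matrix.fromBlocks 0 0 0 (B i))

theorem aux_diag {p q : Type*} [Fintype p] [Fintype q] 
    (M : Matrix p p ℂ) (N : Matrix q q ℂ) :
    (Matrix.fromBlocks M 0 0 N).PosSemidef ↔ M.PosSemidef ∧ N.PosSemidef := by
  constructor
  · intro h
    exact ⟨h.submatrix Sum.inl, h.submatrix Sum.inr⟩
  · rintro ⟨h1, h2⟩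
    refine Matrix.PosSemidef.of_dotProduct_mulVec_nonneg ?_ ?_
    · exact Matrix.IsHermitian.fromBlocks h1.1 (by simp) h2.1
    · intro x
      have e1 := h1.dotProduct_mulVec_nonneg (x ∘ Sum.inl)
      have e2 := h2.dotProduct_mulVec_nonneg (x ∘ Sum.inr)
      have := add_nonneg e1 e2
      rw [Matrix.fromBlocks_mulVec]
      simpa [dotProduct, Fintype.sum_sum_type] using this

theorem aux_prod {g h dA dB : ℕ} {m : Type*} [Fintype m] [DecidableEq m]
    (A : Fin g → Matrix (Fin dA) (Fin dA) ℂ) (B : Fin h → Matrix (Fin dB) (Fin dB) ℂ)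
    (W : Fin g ⊕ Fin h → Matrix m m ℂ) :
    memD (prodTuple A B) W ↔
      memD A (fun i => W (Sum.inl i)) ∧ memD B (fun i => W (Sum.inr i)) := by
  unfold memD
  rw [← Matrix.posSemidef_submatrix_equiv (Equiv.sumProdDistrib (Fin dA) (Fin dB) m).symm]
  have : ((1 : Matrix ((Fin dA ⊕ Fin dB) × m) ((Fin dA ⊕ Fin dB) × m) ℂ)
      - ∑ i, prodTuple A B i ⊗ₖ W i).submatrix
        (Equiv.sumProdDistrib (Fin dA) (Fin dB) m).symm
        (Equiv.sumProdDistrib (Fin dA) (Fin dB) m).symm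
      = Matrix.fromBlocks (1 - ∑ i, A i ⊗ₖ W (Sum.inl i)) 0 0
          (1 - ∑ i, B i ⊗ₖ W (Sum.inr i)) := by
    ext (⟨a, u⟩ | ⟨a, u⟩) (⟨b, v⟩ | ⟨b, v⟩) <;>
      simp [prodTuple, Matrix.sum_apply, Matrix.one_apply]
  rw [this, aux_diag, Sum.forall]
  tauto

theorem aux_pad {ι : Type*} [Fintype ι] {d : Type*} [Fintype d] [DecidableEq d]
    {m r : Type*} [Fintype m] [DecidableEq m] [Fintype r] [DecidableEq r]
    (A : ι → Matrix d d ℂ) (X : ι → Matrix m m ℂ) (hX : memD A X) :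
    memD A (fun i => Matrix.fromBlocks (X i) (0 : Matrix m r ℂ) (0 : Matrix m r ℂ)ᴴ
      (0 : Matrix r r ℂ)) := by
  refine ⟨fun i => Matrix.IsHermitian.fromBlocks (hX.1 i) rfl (by simp), ?_⟩
  rw [← Matrix.posSemidef_submatrix_equiv (Equiv.prodSumDistrib d m r).symm]
  have : ((1 : Matrix (d × (m ⊕ r)) (d × (m ⊕ r)) ℂ)
      - ∑ i, A i ⊗ₖ Matrix.fromBlocks (X i) (0 : Matrix m r ℂ) (0 : Matrix m r ℂ)ᴴ
      (0 : Matrix r r ℂ)).submatrix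
        (Equiv.prodSumDistrib d m r).symm (Equiv.prodSumDistrib d m r).symm
      = Matrix.fromBlocks (1 - ∑ i, A i ⊗ₖ X i) 0 0 1 := by
    ext (⟨a, u⟩ | ⟨a, u⟩) (⟨b, v⟩ | ⟨b, v⟩) <;>
      simp [Matrix.sum_apply, Matrix.one_apply]
  rw [this, aux_diag]
  exact ⟨hX.2, Matrix.PosSemidef.one⟩

/-- For bounded free spectrahedra `D_A`, `D_B` and `(X,Y)` in level `n` of `D_A × D_B`:
`(X,Y)` is Arveson extreme in `D_A × D_B` iff `X` and `Y` are Arveson extreme in `D_A`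
and `D_B`; and `(X,Y)` is a Euclidean extreme point of `(D_A × D_B)(n)` iff `X` and `Y`
are extreme points of `D_A(n)` and `D_B(n)`. -/
theorem stmt_9 {g h dA dB n : ℕ} (hn : 1 ≤ n)
    (A : Fin g → Matrix (Fin dA) (Fin dA) ℂ) (B : Fin h → Matrix (Fin dB) (Fin dB) ℂ)
    (hAH : ∀ i, (A i).IsHermitian) (hBH : ∀ i, (B i).IsHermitian)
    (hA : BoundedD A) (hB : BoundedD B)
    (X : Fin g → Matrix (Fin n) (Fin n) ℂ) (Y : Fin h → Matrix (Fin n) (Fin n) ℂ)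
    (hX : memD A X) (hY : memD B Y) :
    (IsArvesonExtreme (prodTuple A B) (Sum.elim X Y) ↔
      IsArvesonExtreme A X ∧ IsArvesonExtreme B Y) ∧
    (Sum.elim X Y ∈ Set.extremePoints ℝ {W | memD (prodTuple A B) W} ↔
      X ∈ Set.extremePoints ℝ {W | memD A W} ∧
        Y ∈ Set.extremePoints ℝ {W | memD B W}) := by
  have hXY : memD (prodTuple A B) (Sum.elim X Y) := (aux_prod A B _).2 ⟨hX, hY⟩
  refine ⟨⟨?_, ?_⟩, ?_⟩
  · rintro ⟨-, H⟩
    refine ⟨⟨hX, ?_⟩, ⟨hY, ?_⟩⟩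
    · intro r hr β γ hγ hm
      have := H r hr (Sum.elim β 0) (Sum.elim γ 0)
        (by rintro (i | i); exacts [hγ i, Matrix.isHermitian_zero])
        ((aux_prod A B _).2 ⟨hm, aux_pad B Y hY⟩)
      funext i
      exact congrFun this (Sum.inl i)
    · intro r hr β γ hγ hm
      have := H r hr (Sum.elim 0 β) (Sum.elim 0 γ)
        (by rintro (i | i); exacts [Matrix.isHermitian_zero, hγ i])
        ((aux_prod A B _).2 ⟨aux_pad A X hX, hm⟩)
      funext i
      exact congrFun this (Sum.inr i)
  · rintro ⟨⟨-, H1⟩, ⟨-, H2⟩⟩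
    refine ⟨hXY, ?_⟩
    intro r hr β γ hγ hm
    obtain ⟨h1, h2⟩ := (aux_prod A B _).1 hm
    have e1 := H1 r hr (fun i => β (Sum.inl i)) (fun i => γ (Sum.inl i))
      (fun i => hγ _) h1
    have e2 := H2 r hr (fun i => β (Sum.inr i)) (fun i => γ (Sum.inr i))
      (fun i => hγ _) h2
    funext i
    rcases i with i | i
    · exact congrFun e1 i
    · exact congrFun e2 i
  · simp only [mem_extremePoints_iff_left, Set.mem_setOf_eq]
    constructor
    · rintro ⟨-, H⟩
      refine ⟨⟨hX, ?_⟩, ⟨hY, ?_⟩⟩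
      · rintro x₁ h₁ x₂ h₂ ⟨a, b, ha, hb, hab, he⟩
        have := H (Sum.elim x₁ Y) ((aux_prod A B _).2 ⟨h₁, hY⟩)
          (Sum.elim x₂ Y) ((aux_prod A B _).2 ⟨h₂, hY⟩) ⟨a, b, ha, hb, hab, by
            funext i
            rcases i with i | i
            · exact congrFun he i
            · change a • Y i + b • Y i = Y i
              rw [← add_smul, hab, one_smul]⟩
        funext i
        exact congrFun this (Sum.inl i)
      · rintro x₁ h₁ x₂ h₂ ⟨a, b, ha, hb, hab, he⟩
        have := H (Sum.elim X x₁) ((aux_prod A B _).2 ⟨hX, h₁⟩)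
          (Sum.elim X x₂) ((aux_prod A B _).2 ⟨hX, h₂⟩) ⟨a, b, ha, hb, hab, by
            funext i
            rcases i with i | i
            · change a • X i + b • X i = X i
              rw [← add_smul, hab, one_smul]
            · exact congrFun he i⟩
        funext i
        exact congrFun this (Sum.inr i)
    · rintro ⟨⟨-, H1⟩, ⟨-, H2⟩⟩
      refine ⟨hXY, ?_⟩
      rintro x₁ h₁ x₂ h₂ ⟨a, b, ha, hb, hab, he⟩
      obtain ⟨p1, q1⟩ := (aux_prod A B _).1 h₁
      obtain ⟨p2, q2⟩ := (aux_prod A B _).1 h₂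
      have e1 := H1 _ p1 _ p2 ⟨a, b, ha, hb, hab, by
        funext i; exact congrFun he (Sum.inl i)⟩
      have e2 := H2 _ q1 _ q2 ⟨a, b, ha, hb, hab, by
        funext i; exact congrFun he (Sum.inr i)⟩
      funext i
      rcases i with i | i
      · exact congrFun e1 i
      · exact congrFun e2 i
end

section
/- Let D_S be a bounded free simplex in g variables with defining matrices S_j = diag(s_{1,j},…,s_{g+1,j}), and let X ∈ D_S(2) be a Euclidean extreme point of D_S(2) (a tuple of 2×2 complex Hermitian matrices). Then either (a) for every ℓ ∈ {1,…,g+1} the matrix I_2 − Σ_{j=1}^g s_{ℓ,j} X_j has nonzero kernel, or (b) there exists ℓ_0 ∈ {1,…,g+1} such that I_2 − Σ_{j=1}^g s_{ℓ,j} X_j = 0 for every ℓ ≠ ℓ_0; and in case (b) there exists an extreme point x = (x_1,…,x_g) of the convex set D_S(1) ⊆ ℝ^g such that X_j = x_j·I_2 for all j. -/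
open Matrix
open scoped Kronecker ComplexOrder

/-- The real-diagonal defining tuple of a free simplex in `g` variables, determined by the
diagonal entries `σ j : Fin (g+1) → ℝ`. -/
noncomputable def simplexPencil {g : ℕ} (σ : Fin g → Fin (g + 1) → ℝ) :
    Fin g → Matrix (Fin (g + 1)) (Fin (g + 1)) ℂ :=
  fun j => Matrix.diagonal fun p => ((σ j p : ℝ) : ℂ)

theorem aux_shift {n : Type*} [Fintype n] [DecidableEq n] {A : Matrix n n ℂ} (hA : A.IsHermitian)
    (m : ℝ) (hm : ∀ i, m ≤ hA.eigenvalues i) : (A - m • (1 : Matrix n n ℂ)).PosSemidef := by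
  have key : A - m • (1 : Matrix n n ℂ) = Unitary.conjStarAlgAut ℂ _ hA.eigenvectorUnitary
      (diagonal (fun i => ((hA.eigenvalues i - m : ℝ) : ℂ))) := by
    have h1 : (diagonal (fun i => ((hA.eigenvalues i - m : ℝ) : ℂ)) : Matrix n n ℂ)
        = diagonal (RCLike.ofReal ∘ hA.eigenvalues) - (m : ℂ) • (1 : Matrix n n ℂ) := by
      ext i j
      by_cases h : i = j
      · subst h; simp
      · simp [h]
    rw [h1, map_sub, map_smul, map_one, ← hA.spectral_theorem]
    congr 1
  rw [key, Unitary.conjStarAlgAut_apply]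
  refine PosSemidef.mul_mul_conjTranspose_same (PosSemidef.diagonal ?_) _
  intro i
  simpa using hm i

theorem aux_pert {P Q : Matrix (Fin 2) (Fin 2) ℂ} (hP : P.PosDef) (hQ : Q.PosSemidef) :
    ∃ ε : ℝ, 0 < ε ∧ ∀ t : ℝ, t ≤ ε → (P - t • Q).PosSemidef := by
  have hPs := hP.posSemidef
  obtain ⟨m, hm0, hm⟩ : ∃ m : ℝ, 0 < m ∧ (P - m • (1 : Matrix (Fin 2) (Fin 2) ℂ)).PosSemidef := by
    refine ⟨min (hP.1.eigenvalues 0) (hP.1.eigenvalues 1),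
      lt_min (hP.eigenvalues_pos 0) (hP.eigenvalues_pos 1), aux_shift hP.1 _ ?_⟩
    intro i; fin_cases i <;> simp
  obtain ⟨M, hM0, hM⟩ : ∃ M : ℝ, 0 < M ∧ (M • (1 : Matrix (Fin 2) (Fin 2) ℂ) - Q).PosSemidef := by
    have hn : (-Q).IsHermitian := hQ.1.neg
    have := aux_shift hn (min (-1) (min (hn.eigenvalues 0) (hn.eigenvalues 1))) (by
      intro i; fin_cases i <;> simp)
    refine ⟨-(min (-1) (min (hn.eigenvalues 0) (hn.eigenvalues 1))), ?_, ?_⟩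
    · have := min_le_left (-1 : ℝ) (min (hn.eigenvalues 0) (hn.eigenvalues 1))
      linarith
    · convert this using 1
      rw [neg_smul]; abel
  refine ⟨m / M, by positivity, fun t ht => ?_⟩
  rcases le_total t 0 with h | h
  · have := hPs.add (hQ.smul (neg_nonneg.2 h))
    convert this using 1
    rw [neg_smul, sub_eq_add_neg]
  · have h2 : 0 ≤ m - t * M := by
      rw [le_div_iff₀ hM0] at ht; linarith
    have := (hm.add (hM.smul h)).add
      ((PosSemidef.one : (1 : Matrix (Fin 2) (Fin 2) ℂ).PosSemidef).smul h2)
    convert this using 1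
    module

theorem aux_mem {g : ℕ} {m : Type*} [Fintype m] [DecidableEq m] (s : Fin g → Fin (g + 1) → ℝ)
    (W : Fin g → Matrix m m ℂ) : memD (simplexPencil s) W ↔
      (∀ i, (W i).IsHermitian) ∧
        ∀ ℓ, ((1 : Matrix m m ℂ) - ∑ j, s j ℓ • W j).PosSemidef := by
  unfold memD
  refine and_congr_right fun hH => ?_
  have hent : ∀ p a q b, ((1 : Matrix (Fin (g+1) × m) (Fin (g+1) × m) ℂ)
      - ∑ i, simplexPencil s i ⊗ₖ W i) (p, a) (q, b)
      = if p = q then ((1 : Matrix m m ℂ) - ∑ j, s j p • W j) a b else 0 := by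
    intro p a q b
    by_cases h : p = q
    · subst h
      simp [simplexPencil, Matrix.sum_apply, Matrix.one_apply]
    · simp [simplexPencil, Matrix.sum_apply, Matrix.one_apply, h]
  constructor
  · intro h ℓ
    have := h.submatrix (fun a : m => (ℓ, a))
    convert this using 1
    ext a b
    rw [Matrix.submatrix_apply, hent, if_pos rfl]
  · intro h
    refine PosSemidef.of_dotProduct_mulVec_nonneg ?_ ?_
    · ext ⟨p, a⟩ ⟨q, b⟩
      rw [Matrix.conjTranspose_apply, hent, hent]
      by_cases hpq : p = q
      · subst hpq
        rw [if_pos rfl, if_pos rfl]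
        exact (h p).1.apply a b
      · rw [if_neg hpq, if_neg (Ne.symm hpq), star_zero]
    · intro x
      have : star x ⬝ᵥ (((1 : Matrix (Fin (g+1) × m) (Fin (g+1) × m) ℂ)
          - ∑ i, simplexPencil s i ⊗ₖ W i) *ᵥ x) = ∑ p, star (fun a => x (p, a)) ⬝ᵥ
            (((1 : Matrix m m ℂ) - ∑ j, s j p • W j) *ᵥ (fun a => x (p, a))) := by
        simp only [dotProduct, mulVec, Fintype.sum_prod_type, hent, Pi.star_apply]
        refine Finset.sum_congr rfl fun p _ => Finset.sum_congr rfl fun a _ => ?_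
        congr 1
        rw [Finset.sum_eq_single p]
        · simp
        · intro q _ hq
          simp [Ne.symm hq]
        · simp
      rw [this]
      exact Finset.sum_nonneg fun p _ => (h p).dotProduct_mulVec_nonneg _

theorem aux_inj0 {g : ℕ} (s : Fin g → Fin (g + 1) → ℝ)
    (hbdd : BoundedD (simplexPencil s)) (y : Fin g → ℝ)
    (hy : ∀ ℓ, ∑ j, s j ℓ * y j ≤ 0) : y = 0 := by
  obtain ⟨C, hC⟩ := hbdd 1
  by_contra hne
  obtain ⟨i, hi⟩ : ∃ i, y i ≠ 0 := by
    by_contra! h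
    exact hne (funext h)
  have key : ∀ t : ℝ, 0 ≤ t → t * |y i| ≤ C := by
    intro t ht
    have := hC (fun j => (t * y j) • (1 : Matrix (Fin 1) (Fin 1) ℂ)) ((aux_mem s _).2 ⟨?_, ?_⟩) i 0 0
    · simpa [abs_of_nonneg ht] using this
    · intro j
      simp [Matrix.IsHermitian, Matrix.conjTranspose_smul]
    · intro ℓ
      have e : (1 : Matrix (Fin 1) (Fin 1) ℂ) - ∑ j, s j ℓ • (t * y j) • (1 : Matrix (Fin 1) (Fin 1) ℂ)
          = (1 - t * ∑ j, s j ℓ * y j) • (1 : Matrix (Fin 1) (Fin 1) ℂ) := by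
        rw [sub_smul, one_smul, Finset.mul_sum, Finset.sum_smul]
        congr 1
        refine Finset.sum_congr rfl fun j _ => ?_
        rw [smul_smul]; congr 1; ring
      rw [e]
      refine PosSemidef.one.smul ?_
      nlinarith [hy ℓ]
  have hp : 0 < |y i| := abs_pos.2 hi
  have h0 := key 0 le_rfl
  have := key ((C + 1) / |y i|) (by apply div_nonneg <;> linarith)
  rw [div_mul_cancel₀ _ hp.ne'] at this
  linarith

theorem aux_inj {g : ℕ} (s : Fin g → Fin (g + 1) → ℝ)
    (hbdd : BoundedD (simplexPencil s)) (ℓ₀ : Fin (g + 1)) (y : Fin g → ℝ)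
    (hy : ∀ ℓ, ℓ ≠ ℓ₀ → ∑ j, s j ℓ * y j = 0) : y = 0 := by
  rcases le_total (∑ j, s j ℓ₀ * y j) 0 with h | h
  · refine aux_inj0 s hbdd y fun ℓ => ?_
    by_cases e : ℓ = ℓ₀
    · rw [e]; exact h
    · exact (hy ℓ e).le
  · have := aux_inj0 s hbdd (-y) fun ℓ => ?_
    · simpa using this
    · by_cases e : ℓ = ℓ₀
      · rw [e]; simpa using h
      · simpa using (hy ℓ e).ge

theorem aux_surj {g : ℕ} (s : Fin g → Fin (g + 1) → ℝ)
    (hbdd : BoundedD (simplexPencil s)) (ℓ₀ : Fin (g + 1)) (b : Fin (g + 1) → ℝ) :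
    ∃ y : Fin g → ℝ, ∀ ℓ, ℓ ≠ ℓ₀ → ∑ j, s j ℓ * y j = b ℓ := by
  let M : Matrix (Fin g) (Fin g) ℝ := Matrix.of fun i j => s j (ℓ₀.succAbove i)
  have hinj : Function.Injective M.mulVecLin := by
    rw [injective_iff_map_eq_zero]
    intro y hy
    refine aux_inj s hbdd ℓ₀ y fun ℓ hℓ => ?_
    obtain ⟨i, rfl⟩ := Fin.exists_succAbove_eq hℓ
    exact congrFun hy i
  obtain ⟨y, hy⟩ := LinearMap.injective_iff_surjective.1 hinj (fun i => b (ℓ₀.succAbove i))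
  refine ⟨y, fun ℓ hℓ => ?_⟩
  obtain ⟨i, rfl⟩ := Fin.exists_succAbove_eq hℓ
  exact congrFun hy i

theorem aux_diag_s15 {g : ℕ} (s : Fin g → Fin (g + 1) → ℝ) (y : Fin g → ℝ) :
    ((1 : Matrix (Fin (g + 1)) (Fin (g + 1)) ℝ)
      - ∑ j, y j • Matrix.diagonal (s j)).PosSemidef ↔ ∀ ℓ, ∑ j, s j ℓ * y j ≤ 1 := by
  have : (1 : Matrix (Fin (g + 1)) (Fin (g + 1)) ℝ) - ∑ j, y j • Matrix.diagonal (s j)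
      = Matrix.diagonal fun ℓ => 1 - ∑ j, s j ℓ * y j := by
    ext a b
    by_cases h : a = b
    · subst h; simp [Matrix.sum_apply, mul_comm]
    · simp [Matrix.sum_apply, h]
  rw [this, posSemidef_diagonal_iff]
  simp

/-- Let `D_S` be a bounded free simplex with defining matrices `S_j = diag(s_{1,j},…,s_{g+1,j})`
and let `X ∈ D_S(2)` be a Euclidean extreme point of `D_S(2)`.  Then either every matrix
`I_2 − Σ_j s_{ℓ,j} X_j` has nonzero kernel, or all but one of them vanish; and in the latter
case `X = x·I_2` for an extreme point `x` of `D_S(1)`. -/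
theorem stmt_15 {g : ℕ} (s : Fin g → Fin (g + 1) → ℝ)
    (hbdd : BoundedD (simplexPencil s))
    (X : Fin g → Matrix (Fin 2) (Fin 2) ℂ)
    (hXeuc : X ∈ Set.extremePoints ℝ
      {W : Fin g → Matrix (Fin 2) (Fin 2) ℂ | memD (simplexPencil s) W}) :
    (∀ ℓ : Fin (g + 1), ∃ v : Fin 2 → ℂ, v ≠ 0 ∧
        ((1 : Matrix (Fin 2) (Fin 2) ℂ) - ∑ j, s j ℓ • X j).mulVec v = 0) ∨
    (∃ ℓ₀ : Fin (g + 1),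
      (∀ ℓ, ℓ ≠ ℓ₀ → (1 : Matrix (Fin 2) (Fin 2) ℂ) - ∑ j, s j ℓ • X j = 0) ∧
      ∃ x ∈ Set.extremePoints ℝ
          {y : Fin g → ℝ | ((1 : Matrix (Fin (g + 1)) (Fin (g + 1)) ℝ)
              - ∑ j, y j • Matrix.diagonal (s j)).PosSemidef},
        ∀ j, X j = x j • (1 : Matrix (Fin 2) (Fin 2) ℂ)) := by
  rw [or_iff_not_imp_left]
  intro hnot
  push Not at hnot
  obtain ⟨ℓ₀, hℓ₀⟩ := hnot
  obtain ⟨hXm, hXe⟩ := hXeuc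
  obtain ⟨hXH, hXP⟩ := (aux_mem s X).1 hXm
  have hPD : ((1 : Matrix (Fin 2) (Fin 2) ℂ) - ∑ j, s j ℓ₀ • X j).PosDef := by
    refine PosDef.of_dotProduct_mulVec_pos (hXP ℓ₀).1 fun v hv => ?_
    refine lt_of_le_of_ne ((hXP ℓ₀).dotProduct_mulVec_nonneg v) fun h => hℓ₀ v hv ?_
    exact ((hXP ℓ₀).dotProduct_mulVec_zero_iff v).1 h.symm
  have hzero : ∀ ℓ, ℓ ≠ ℓ₀ → (1 : Matrix (Fin 2) (Fin 2) ℂ) - ∑ j, s j ℓ • X j = 0 := by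
    intro ℓ₁ hne
    by_contra hQ0
    set Q := (1 : Matrix (Fin 2) (Fin 2) ℂ) - ∑ j, s j ℓ₁ • X j with hQ
    have hQP : Q.PosSemidef := hXP ℓ₁
    obtain ⟨ε, hε, hpert⟩ := aux_pert hPD hQP
    obtain ⟨y, hy⟩ := aux_surj s hbdd ℓ₀ (fun ℓ => if ℓ = ℓ₁ then 1 else 0)
    set c := ∑ j, s j ℓ₀ * y j with hc
    obtain ⟨δ, hδ, hδ1, hδc⟩ : ∃ δ : ℝ, 0 < δ ∧ δ ≤ 1 ∧ δ * |c| ≤ ε := by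
      refine ⟨min 1 (ε / (|c| + 1)), by positivity, min_le_left _ _, ?_⟩
      calc min 1 (ε / (|c| + 1)) * |c| ≤ (ε / (|c| + 1)) * (|c| + 1) := by
            gcongr
            · exact min_le_right _ _
            · linarith
        _ = ε := by field_simp
    have hmem : ∀ t : ℝ, |t| ≤ δ → memD (simplexPencil s) (fun j => X j + (t * y j) • Q) := by
      intro t ht
      refine (aux_mem s _).2 ⟨fun j => ?_, fun ℓ => ?_⟩
      · refine (hXH j).add ?_
        have := hQP.1
        rw [Matrix.IsHermitian] at this ⊢
        rw [Matrix.conjTranspose_smul, this, star_trivial]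
      · have e : (1 : Matrix (Fin 2) (Fin 2) ℂ) - ∑ j, s j ℓ • (X j + (t * y j) • Q)
            = ((1 : Matrix (Fin 2) (Fin 2) ℂ) - ∑ j, s j ℓ • X j)
              - (t * ∑ j, s j ℓ * y j) • Q := by
          rw [sub_sub, Finset.mul_sum, Finset.sum_smul, ← Finset.sum_add_distrib]
          congr 1
          refine Finset.sum_congr rfl fun j _ => ?_
          module
        rw [e]
        by_cases h0 : ℓ = ℓ₀
        · subst h0
          apply hpert
          calc t * c ≤ |t * c| := le_abs_self _
            _ = |t| * |c| := abs_mul _ _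
            _ ≤ δ * |c| := by gcongr
            _ ≤ ε := hδc
        · rw [hy ℓ h0]
          by_cases h1 : ℓ = ℓ₁
          · subst h1
            rw [if_pos rfl, mul_one, ← hQ]
            have : 0 ≤ 1 - t := by linarith [le_abs_self t]
            have := hQP.smul this
            rwa [sub_smul, one_smul] at this
          · rw [if_neg h1, mul_zero, zero_smul, sub_zero]
            exact hXP ℓ
    have h1 := hmem δ (by rw [abs_of_pos hδ])
    have h2 := hmem (-δ) (by rw [abs_neg, abs_of_pos hδ])
    have h3 := hXe h1 h2 ⟨1/2, 1/2, by norm_num, by norm_num, by norm_num, by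
      funext j
      simp only [Pi.add_apply, Pi.smul_apply]
      module⟩
    have hy0 : y = 0 := by
      funext j
      have := congrFun h3 j
      simp only [add_eq_left, smul_eq_zero, hQ0, or_false, mul_eq_zero, hδ.ne', false_or] at this
      exact this
    have := hy ℓ₁ hne
    simp [hy0] at this
  refine ⟨ℓ₀, hzero, ?_⟩
  obtain ⟨x, hx⟩ := aux_surj s hbdd ℓ₀ (fun _ => 1)
  have hXx : ∀ j, X j = x j • (1 : Matrix (Fin 2) (Fin 2) ℂ) := by
    have hent : ∀ ℓ, ℓ ≠ ℓ₀ → ∀ p q, ∑ j, (s j ℓ : ℂ) * (X j - x j • (1 : Matrix (Fin 2) (Fin 2) ℂ)) p q = 0 := by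
      intro ℓ hℓ p q
      have h1 : ∑ j, s j ℓ • (X j - x j • (1 : Matrix (Fin 2) (Fin 2) ℂ)) = 0 := by
        have h2 : ∑ j, s j ℓ • (X j - x j • (1 : Matrix (Fin 2) (Fin 2) ℂ))
            = ∑ j, s j ℓ • X j - (∑ j, s j ℓ * x j) • (1 : Matrix (Fin 2) (Fin 2) ℂ) := by
          rw [Finset.sum_smul, ← Finset.sum_sub_distrib]
          refine Finset.sum_congr rfl fun j _ => ?_
          module
        rw [h2, hx ℓ hℓ, one_smul, ← neg_sub, hzero ℓ hℓ, neg_zero]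
      have h3 := congrFun (congrFun h1 p) q
      simpa [Matrix.sum_apply] using h3
    intro j
    ext p q
    have hre := aux_inj s hbdd ℓ₀ (fun j => ((X j - x j • (1 : Matrix (Fin 2) (Fin 2) ℂ)) p q).re)
      (fun ℓ hℓ => by
        have := congrArg Complex.re (hent ℓ hℓ p q)
        simpa only [Complex.re_sum, Complex.re_ofReal_mul, Complex.zero_re] using this)
    have him := aux_inj s hbdd ℓ₀ (fun j => ((X j - x j • (1 : Matrix (Fin 2) (Fin 2) ℂ)) p q).im)
      (fun ℓ hℓ => by
        have := congrArg Complex.im (hent ℓ hℓ p q)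
        simpa only [Complex.im_sum, Complex.im_ofReal_mul, Complex.zero_im] using this)
    have : (X j - x j • (1 : Matrix (Fin 2) (Fin 2) ℂ)) p q = 0 :=
      Complex.ext (congrFun hre j) (congrFun him j)
    rw [Matrix.sub_apply] at this
    exact sub_eq_zero.1 this
  refine ⟨x, ⟨?_, ?_⟩, hXx⟩
  · refine (aux_diag_s15 s x).2 fun ℓ => ?_
    by_cases h : ℓ = ℓ₀
    · have h1 := (hXP ℓ).diag_nonneg (i := 0)
      have h2 := (Complex.le_def.1 h1).1
      simp [hXx, Matrix.sum_apply] at h2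
      exact h2
    · exact (hx ℓ h).le
  · intro u hu v hv huv
    obtain ⟨a, b, ha, hb, hab, h⟩ := huv
    have hu' := (aux_diag_s15 s u).1 hu
    have hv' := (aux_diag_s15 s v).1 hv
    have := aux_inj s hbdd ℓ₀ (u - x) fun ℓ hℓ => by
      have e1 : ∑ j, s j ℓ * x j = a * ∑ j, s j ℓ * u j + b * ∑ j, s j ℓ * v j := by
        rw [← h, Finset.mul_sum, Finset.mul_sum, ← Finset.sum_add_distrib]
        refine Finset.sum_congr rfl fun j _ => ?_
        simp; ring
      have e2 := hx ℓ hℓ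
      have e3 : ∑ j, s j ℓ * (u - x) j = ∑ j, s j ℓ * u j - 1 := by
        rw [← e2, ← Finset.sum_sub_distrib]
        refine Finset.sum_congr rfl fun j _ => ?_
        simp; ring
      rw [e3]
      nlinarith [hu' ℓ, hv' ℓ, mul_nonneg hb.le (sub_nonneg.2 (hv' ℓ)), mul_nonneg ha.le (sub_nonneg.2 (hu' ℓ))]
    exact sub_eq_zero.1 this
end

section
/- Let D_S be a bounded free simplex in g variables and let X ∈ D_S(2) be a tuple of real symmetric 2×2 matrices that is a Euclidean extreme point of D_S(2) and such that some X_j is not a real scalar multiple of I_2. If (H, W_1,…,W_g) is a tuple of 2×2 complex Hermitian matrices satisfying ker L_S(X) ⊆ ker Λ_{(I,−S)}(H, W), then all entries of H are real. -/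
open Matrix
open scoped Kronecker ComplexOrder

theorem kron_entry {g : ℕ} {m : Type*} [Fintype m] [DecidableEq m] (s : Fin g → Fin (g + 1) → ℝ)
    (H : Matrix m m ℂ) (W : Fin g → Matrix m m ℂ) (v : Fin (g + 1) × m → ℂ)
    (p : Fin (g + 1)) (a : m) :
    ((1 : Matrix (Fin (g + 1)) (Fin (g + 1)) ℂ) ⊗ₖ H
          - ∑ j, simplexPencil s j ⊗ₖ W j).mulVec v (p, a)
      = ((H - ∑ j, (s j p : ℂ) • W j).mulVec (fun b => v (p, b))) a := by
  simp only [Matrix.mulVec, dotProduct, Fintype.sum_prod_type]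
  rw [Finset.sum_eq_single p]
  · refine Finset.sum_congr rfl fun b _ => ?_
    simp [Matrix.sum_apply, simplexPencil, Matrix.sub_apply, Matrix.kroneckerMap_apply]
  · intro q _ hq
    refine Finset.sum_eq_zero fun b _ => ?_
    simp [Matrix.sum_apply, simplexPencil, Matrix.sub_apply, Matrix.kroneckerMap_apply,
      Matrix.one_apply_ne hq.symm, Matrix.diagonal_apply_ne _ hq.symm]
  · simp

theorem kron_herm {g : ℕ} {m : Type*} [Fintype m] [DecidableEq m] (s : Fin g → Fin (g + 1) → ℝ)
    (W : Fin g → Matrix m m ℂ) (hW : ∀ j, (W j).IsHermitian) :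
    ((1 : Matrix (Fin (g + 1) × m) (Fin (g + 1) × m) ℂ)
          - ∑ j, simplexPencil s j ⊗ₖ W j).IsHermitian := by
  unfold Matrix.IsHermitian
  rw [Matrix.conjTranspose_sub, Matrix.conjTranspose_one, Matrix.conjTranspose_sum]
  congr 1
  refine Finset.sum_congr rfl fun j _ => ?_
  rw [Matrix.conjTranspose_kronecker, (hW j).eq]
  congr 1
  ext i j
  by_cases h : i = j
  · subst h; simp [simplexPencil]
  · simp [simplexPencil, Matrix.diagonal_apply_ne _ h, Matrix.diagonal_apply_ne _ (Ne.symm h)]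

theorem block_herm {g : ℕ} {m : Type*} [Fintype m] [DecidableEq m] (t : Fin g → ℝ)
    (H : Matrix m m ℂ) (hH : H.IsHermitian)
    (W : Fin g → Matrix m m ℂ) (hW : ∀ j, (W j).IsHermitian) :
    (H - ∑ j, (t j : ℂ) • W j).IsHermitian := by
  unfold Matrix.IsHermitian
  rw [Matrix.conjTranspose_sub, hH.eq, Matrix.conjTranspose_sum]
  congr 1
  refine Finset.sum_congr rfl fun j _ => ?_
  rw [Matrix.conjTranspose_smul, (hW j).eq]
  simp

theorem memD_iff {g : ℕ} {m : Type*} [Fintype m] [DecidableEq m] (s : Fin g → Fin (g + 1) → ℝ)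
    (X : Fin g → Matrix m m ℂ) :
    memD (simplexPencil s) X ↔ (∀ j, (X j).IsHermitian) ∧
      ∀ p, ((1 : Matrix m m ℂ) - ∑ j, (s j p : ℂ) • X j).PosSemidef := by
  unfold memD
  refine and_congr_right fun hX => ?_
  have key : ∀ v : Fin (g + 1) × m → ℂ, star v ⬝ᵥ
      (((1 : Matrix (Fin (g + 1) × m) (Fin (g + 1) × m) ℂ)
          - ∑ j, simplexPencil s j ⊗ₖ X j).mulVec v) =
      ∑ p, star (fun b => v (p, b)) ⬝ᵥ
        ((1 - ∑ j, (s j p : ℂ) • X j).mulVec (fun b => v (p, b))) := by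
    intro v
    rw [← Matrix.one_kronecker_one]
    rw [dotProduct, Fintype.sum_prod_type]
    refine Finset.sum_congr rfl fun p _ => ?_
    refine Finset.sum_congr rfl fun a _ => ?_
    rw [kron_entry]
    rfl
  constructor
  · intro h p
    refine Matrix.PosSemidef.of_dotProduct_mulVec_nonneg
      (block_herm _ _ Matrix.isHermitian_one _ hX) fun w => ?_
    have := h.dotProduct_mulVec_nonneg (fun r => if r.1 = p then w r.2 else 0)
    rw [key, Finset.sum_eq_single p] at this
    · simpa using this
    · intro q _ hq
      simp [hq, dotProduct]
    · simp
  · intro h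
    refine Matrix.PosSemidef.of_dotProduct_mulVec_nonneg (kron_herm s X hX) fun v => ?_
    rw [key]
    exact Finset.sum_nonneg fun p _ => (h p).dotProduct_mulVec_nonneg _

theorem psd2 (M : Matrix (Fin 2) (Fin 2) ℂ) (a b d : ℝ) (hM : M = !![(a : ℂ), b; b, d]) :
    M.PosSemidef ↔ 0 ≤ a ∧ 0 ≤ d ∧ b ^ 2 ≤ a * d := by
  constructor
  · intro h
    have h0 := h.diag_nonneg (i := 0)
    have h1 := h.diag_nonneg (i := 1)
    have h2 := h.det_nonneg
    subst hM
    simp [Matrix.det_fin_two] at h0 h1 h2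
    refine ⟨h0, h1, ?_⟩
    rw [pow_two]
    exact_mod_cast h2
  · rintro ⟨ha, hd, hb⟩
    have form : ∀ x y : ℝ, 0 ≤ a * x ^ 2 + 2 * b * x * y + d * y ^ 2 := by
      intro x y
      rcases ha.eq_or_lt with h | h
      · subst h
        have : b = 0 := by nlinarith [sq_nonneg b]
        subst this
        simp; positivity
      · have : 0 ≤ a * (a * x ^ 2 + 2 * b * x * y + d * y ^ 2) := by
          nlinarith [sq_nonneg (a * x + b * y), mul_nonneg (sub_nonneg.2 hb) (sq_nonneg y)]
        exact nonneg_of_mul_nonneg_right this h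
    refine Matrix.PosSemidef.of_dotProduct_mulVec_nonneg ?_ fun v => ?_
    · subst hM
      ext i j
      fin_cases i <;> fin_cases j <;> simp
    · have : star v ⬝ᵥ M.mulVec v = (((a * (v 0).re ^ 2 + 2 * b * (v 0).re * (v 1).re
          + d * (v 1).re ^ 2) + (a * (v 0).im ^ 2 + 2 * b * (v 0).im * (v 1).im
          + d * (v 1).im ^ 2) : ℝ) : ℂ) := by
        subst hM
        apply Complex.ext
        · simp [dotProduct, Matrix.mulVec, Fin.sum_univ_two, pow_two]
          ring
        · simp [dotProduct, Matrix.mulVec, Fin.sum_univ_two, pow_two]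
          ring
      rw [this]
      exact_mod_cast add_nonneg (form _ _) (form _ _)

theorem bdd_zero {g : ℕ} (s : Fin g → Fin (g + 1) → ℝ) (hbdd : BoundedD (simplexPencil s))
    (b : Fin g → ℝ) (hb : ∀ p, ∑ j, s j p * b j ≤ 0) : b = 0 := by
  obtain ⟨C, hC⟩ := hbdd 1
  funext j
  by_contra hj
  have hj' : 0 < |b j| := abs_pos.2 hj
  have hle : ∀ t : ℝ, 0 ≤ t → t * |b j| ≤ C := by
    intro t ht
    have := hC (fun i => Matrix.diagonal fun _ => ((t * b i : ℝ) : ℂ)) ?_ j 0 0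
    · simpa [abs_of_nonneg ht] using this
    · rw [memD_iff]
      refine ⟨fun i => ?_, fun p => ?_⟩
      · ext x y
        have hx : x = 0 := Subsingleton.elim _ _
        have hy : y = 0 := Subsingleton.elim _ _
        subst hx hy
        simp
      · have : (1 : Matrix (Fin 1) (Fin 1) ℂ) - ∑ i, (s i p : ℂ) •
            (Matrix.diagonal fun _ : Fin 1 => ((t * b i : ℝ) : ℂ))
            = Matrix.diagonal fun _ => ((1 - t * ∑ i, s i p * b i : ℝ) : ℂ) := by
          ext x y
          have hx : x = 0 := Subsingleton.elim _ _
          have hy : y = 0 := Subsingleton.elim _ _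
          subst hx hy
          simp [Matrix.sum_apply, Finset.mul_sum]
          refine Finset.sum_congr rfl fun i _ => ?_
          ring
        rw [this]
        refine Matrix.PosSemidef.diagonal fun _ => ?_
        have : 0 ≤ 1 - t * ∑ i, s i p * b i := by nlinarith [hb p]
        exact Complex.zero_le_real.2 this
  have := hle ((|C| + 1) / |b j|) (by positivity)
  rw [div_mul_cancel₀ _ hj'.ne'] at this
  linarith [le_abs_self C]

theorem bdd_zero' {g : ℕ} (s : Fin g → Fin (g + 1) → ℝ) (hbdd : BoundedD (simplexPencil s))
    (p : Fin (g + 1)) (b : Fin g → ℝ) (hb : ∀ q, q ≠ p → ∑ j, s j q * b j = 0) : b = 0 := by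
  rcases le_total (∑ j, s j p * b j) 0 with h | h
  · refine bdd_zero s hbdd b fun q => ?_
    by_cases hq : q = p
    · exact hq ▸ h
    · exact (hb q hq).le
  · have : -b = 0 := by
      refine bdd_zero s hbdd (-b) fun q => ?_
      simp only [Pi.neg_apply, mul_neg, Finset.sum_neg_distrib, neg_nonpos]
      by_cases hq : q = p
      · exact hq ▸ h
      · exact (hb q hq).ge
    simpa using this

theorem exists_y {g : ℕ} (s : Fin g → Fin (g + 1) → ℝ) (hbdd : BoundedD (simplexPencil s))
    (p : Fin (g + 1)) (t : Fin (g + 1) → ℝ) :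
    ∃ y : Fin g → ℝ, ∀ q, q ≠ p → ∑ j, s j q * y j = t q := by
  let T : Matrix (Fin g) (Fin g) ℝ := Matrix.of fun i j => s j (p.succAbove i)
  have hinj : Function.Injective T.mulVecLin := by
    rw [← LinearMap.ker_eq_bot, LinearMap.ker_eq_bot']
    intro b hb
    refine bdd_zero' s hbdd p b fun q hq => ?_
    obtain ⟨i, rfl⟩ := Fin.exists_succAbove_eq hq
    exact congrFun hb i
  obtain ⟨y, hy⟩ := (LinearMap.injective_iff_surjective.1 hinj) (fun i => t (p.succAbove i))
  refine ⟨y, fun q hq => ?_⟩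
  obtain ⟨i, rfl⟩ := Fin.exists_succAbove_eq hq
  exact congrFun hy i

theorem psd_perturb (B N : Matrix (Fin 2) (Fin 2) ℂ) (a b d a' b' d' : ℝ)
    (hB : B = !![(a : ℂ), b; b, d]) (hN : N = !![(a' : ℂ), b'; b', d'])
    (ha : 0 ≤ a) (hd : 0 ≤ d) (hdet : b ^ 2 < a * d) (c : ℝ) :
    ∀ᶠ ε : ℝ in nhds 0, (B - ((ε * c : ℝ) : ℂ) • N).PosSemidef := by
  have had : 0 < a * d := lt_of_le_of_lt (sq_nonneg b) hdet
  have ha' : 0 < a := by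
    rcases ha.eq_or_lt with h | h
    · subst h; simp at had
    · exact h
  have hd' : 0 < d := by
    rcases hd.eq_or_lt with h | h
    · subst h; simp at had
    · exact h
  have e1 : ∀ᶠ ε : ℝ in nhds 0, 0 < a - ε * c * a' :=
    (by fun_prop : Continuous fun ε : ℝ => a - ε * c * a').continuousAt.eventually
      (lt_mem_nhds (by simpa using ha'))
  have e2 : ∀ᶠ ε : ℝ in nhds 0, 0 < d - ε * c * d' :=
    (by fun_prop : Continuous fun ε : ℝ => d - ε * c * d').continuousAt.eventually
      (lt_mem_nhds (by simpa using hd'))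
  have e3 : ∀ᶠ ε : ℝ in nhds 0,
      0 < (a - ε * c * a') * (d - ε * c * d') - (b - ε * c * b') ^ 2 :=
    (by fun_prop : Continuous fun ε : ℝ =>
      (a - ε * c * a') * (d - ε * c * d') - (b - ε * c * b') ^ 2).continuousAt.eventually
      (lt_mem_nhds (by simpa using hdet))
  filter_upwards [e1, e2, e3] with ε h1 h2 h3
  refine (psd2 _ (a - ε * c * a') (b - ε * c * b') (d - ε * c * d') ?_).2
    ⟨h1.le, h2.le, by linarith⟩
  subst hB hN
  ext i j
  fin_cases i <;> fin_cases j <;> simp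

/-- Let `D_S` be a bounded free simplex and `X ∈ D_S(2)` a tuple of real symmetric 2×2
matrices that is a Euclidean extreme point of `D_S(2)` such that some `X_j` is not a real
scalar multiple of `I_2`.  If `(H, W)` is a tuple of 2×2 Hermitian matrices with
`ker L_S(X) ⊆ ker Λ_{(I,−S)}(H, W)`, then all entries of `H` are real. -/
theorem stmt_16 {g : ℕ} (s : Fin g → Fin (g + 1) → ℝ)
    (hbdd : BoundedD (simplexPencil s))
    (X : Fin g → Matrix (Fin 2) (Fin 2) ℂ)
    (hXreal : ∀ j p q, (X j p q).im = 0)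
    (hXeuc : X ∈ Set.extremePoints ℝ
      {W : Fin g → Matrix (Fin 2) (Fin 2) ℂ | memD (simplexPencil s) W})
    (hXns : ∃ j, ¬ ∃ c : ℝ, X j = c • (1 : Matrix (Fin 2) (Fin 2) ℂ))
    (H : Matrix (Fin 2) (Fin 2) ℂ) (W : Fin g → Matrix (Fin 2) (Fin 2) ℂ)
    (hH : H.IsHermitian) (hW : ∀ j, (W j).IsHermitian)
    (hker : ∀ v : Fin (g + 1) × Fin 2 → ℂ,
      ((1 : Matrix (Fin (g + 1) × Fin 2) (Fin (g + 1) × Fin 2) ℂ)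
          - ∑ j, simplexPencil s j ⊗ₖ X j).mulVec v = 0 →
        ((1 : Matrix (Fin (g + 1)) (Fin (g + 1)) ℂ) ⊗ₖ H
          - ∑ j, simplexPencil s j ⊗ₖ W j).mulVec v = 0) :
    ∀ p q, (H p q).im = 0 := by
  obtain ⟨hmem, hext⟩ := hXeuc
  have hmem' := (memD_iff s X).1 hmem
  obtain ⟨hXh, hpsd⟩ := hmem'
  let ℓ : Fin (g + 1) → Matrix (Fin 2) (Fin 2) ℝ := fun p =>
    1 - ∑ j, s j p • (X j).map Complex.re
  set B : Fin (g + 1) → Matrix (Fin 2) (Fin 2) ℂ := fun p => 1 - ∑ j, (s j p : ℂ) • X j with hBdef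
  have hXre : ∀ j a b, X j a b = ((X j a b).re : ℂ) := fun j a b =>
    Complex.ext (by simp) (by simpa using hXreal j a b)
  have hXsym : ∀ j, (X j 1 0).re = (X j 0 1).re := by
    intro j
    have := congrArg Complex.re ((hXh j).apply 0 1)
    simpa using this
  have hBℓ : ∀ p a b, B p a b = (ℓ p a b : ℂ) := by
    intro p a b
    simp only [B, ℓ, Matrix.sub_apply, Matrix.sum_apply, Matrix.smul_apply, Matrix.map_apply,
      smul_eq_mul, Complex.ofReal_sub, Complex.ofReal_sum, Complex.ofReal_mul, ← hXre]
    congr 1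
    by_cases h : a = b <;> simp [Matrix.one_apply, h]
  have hℓsym : ∀ p, ℓ p 1 0 = ℓ p 0 1 := by
    intro p
    simp [ℓ, Matrix.sum_apply, hXsym]
  have hBform : ∀ p, B p = !![(ℓ p 0 0 : ℂ), ℓ p 0 1; ℓ p 0 1, ℓ p 1 1] := by
    intro p
    ext a b
    rw [hBℓ]
    fin_cases a <;> fin_cases b <;> simp [hℓsym]
  by_cases hall : ∀ p, (ℓ p).det = 0
  · -- all blocks singular
    have hK : ∀ p, (H 0 1).im = ∑ j, s j p * (W j 0 1).im := by
      intro p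
      obtain ⟨w, hw0, hw⟩ := Matrix.exists_mulVec_eq_zero_iff.2 (hall p)
      have hBw : (B p).mulVec (fun b => (w b : ℂ)) = 0 := by
        funext a
        have := congrFun hw a
        simp only [Matrix.mulVec, dotProduct, Pi.zero_apply, hBℓ] at this ⊢
        exact_mod_cast this
      have hk := hker (fun r => if r.1 = p then (w r.2 : ℂ) else 0) (by
        rw [← Matrix.one_kronecker_one]
        funext ⟨q, a⟩
        rw [kron_entry]
        by_cases hq : q = p
        · subst hq
          simp only [if_true]
          exact congrFun hBw a
        · simp [hq, Matrix.mulVec, dotProduct])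
      set K := H - ∑ j, (s j p : ℂ) • W j with hKdef
      have hKh : K.IsHermitian := block_herm _ _ hH _ hW
      have hKw : ∀ a, K.mulVec (fun b => (w b : ℂ)) a = 0 := by
        intro a
        have := congrFun hk (p, a)
        rw [kron_entry] at this
        simp only [if_true] at this
        exact this
      have h00 : (K 0 0).im = 0 := by
        have := congrArg Complex.im (hKh.apply 0 0)
        simp at this; linarith
      have h11 : (K 1 1).im = 0 := by
        have := congrArg Complex.im (hKh.apply 1 1)
        simp at this; linarith
      have h10 : (K 1 0).im = - (K 0 1).im := by
        have := congrArg Complex.im (hKh.apply 0 1)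
        simp at this; linarith
      have e0 := congrArg Complex.im (hKw 0)
      have e1 := congrArg Complex.im (hKw 1)
      simp [Matrix.mulVec, dotProduct, Fin.sum_univ_two, h00, h11, h10] at e0 e1
      have hz : (K 0 1).im = 0 := by
        by_contra hne
        apply hw0
        funext i
        fin_cases i
        · simpa [hne] using e1
        · simpa [hne] using e0
      simp [hKdef, Matrix.sum_apply] at hz
      linarith
    have h01 : (H 0 1).im = 0 := by
      rcases le_total (H 0 1).im 0 with h | h
      · have hb := bdd_zero s hbdd (fun j => (W j 0 1).im) (fun p => (hK p) ▸ h)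
        rw [hK 0]
        exact Finset.sum_eq_zero fun j _ => by rw [show (W j 0 1).im = 0 from congrFun hb j, mul_zero]
      · have hb := bdd_zero s hbdd (fun j => -(W j 0 1).im) (fun p => by
          simp only [mul_neg, Finset.sum_neg_distrib, neg_nonpos]
          exact (hK p) ▸ h)
        rw [hK 0]
        refine Finset.sum_eq_zero fun j _ => ?_
        have : -(W j 0 1).im = 0 := congrFun hb j
        rw [neg_eq_zero.1 this, mul_zero]
    have h00 : (H 0 0).im = 0 := by
      have := congrArg Complex.im (hH.apply 0 0)
      simp at this; linarith
    have h11 : (H 1 1).im = 0 := by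
      have := congrArg Complex.im (hH.apply 1 1)
      simp at this; linarith
    have h10 : (H 1 0).im = 0 := by
      have := congrArg Complex.im (hH.apply 0 1)
      simp at this; linarith
    intro p q
    fin_cases p <;> fin_cases q <;> assumption
  · exfalso
    push Not at hall
    obtain ⟨p, hp⟩ := hall
    obtain ⟨ha, hd, hdet⟩ := (psd2 _ _ _ _ (hBform p)).1 (hpsd p)
    have hdet' : (ℓ p 0 1) ^ 2 < ℓ p 0 0 * ℓ p 1 1 := by
      refine lt_of_le_of_ne hdet fun h => hp ?_
      rw [Matrix.det_fin_two, hℓsym, ← h]; ring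
    have hzero : ∀ q, q ≠ p → B q = 0 := by
      intro q hq
      obtain ⟨y, hy⟩ := exists_y s hbdd p (fun r => if r = q then 1 else 0)
      let Y : Fin g → Matrix (Fin 2) (Fin 2) ℂ := fun j => (y j : ℂ) • B q
      have hblock : ∀ (ε : ℝ) r, (1 : Matrix (Fin 2) (Fin 2) ℂ) - ∑ j, (s j r : ℂ) • (X + ε • Y) j
          = B r - ((ε * ∑ j, s j r * y j : ℝ) : ℂ) • B q := by
        intro ε r
        ext a b
        simp only [hBdef, Y, Matrix.sub_apply, Matrix.sum_apply, Matrix.smul_apply, Pi.add_apply,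
          Pi.smul_apply, Matrix.add_apply, smul_eq_mul, Complex.real_smul, mul_add,
          Finset.sum_add_distrib]
        push_cast
        rw [← sub_sub, Finset.mul_sum, Finset.sum_mul]
        congr 1
        refine Finset.sum_congr rfl fun j _ => ?_
        ring
      have hev : ∀ᶠ ε : ℝ in nhds 0, memD (simplexPencil s) (X + ε • Y) := by
        have h1 : ∀ᶠ ε : ℝ in nhds 0, ε < 1 := gt_mem_nhds one_pos
        filter_upwards [h1, psd_perturb (B p) (B q) _ _ _ _ _ _ (hBform p) (hBform q) ha hd hdet'
          (∑ j, s j p * y j)] with ε hε1 hεp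
        rw [memD_iff]
        refine ⟨fun j => ?_, fun r => ?_⟩
        · have hBq : (B q).IsHermitian := (hpsd q).1
          unfold Matrix.IsHermitian
          simp only [Y, Pi.add_apply, Pi.smul_apply, Matrix.conjTranspose_add,
            Matrix.conjTranspose_smul, hBq.eq, (hXh j).eq]
          simp
        · rw [hblock]
          by_cases hr : r = p
          · subst hr; exact hεp
          · rw [hy r hr]
            by_cases hrq : r = q
            · subst hrq
              have : B r - ((ε * (if r = r then 1 else 0) : ℝ) : ℂ) • B r
                  = ((1 - ε : ℝ) : ℂ) • B r := by
                simp [sub_smul]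
              rw [this]
              refine (hpsd r).smul ?_
              have : 0 ≤ 1 - ε := by linarith
              exact_mod_cast this
            · rw [if_neg hrq, mul_zero, Complex.ofReal_zero, zero_smul, sub_zero]
              exact hpsd r
      have hev2 : ∀ᶠ ε : ℝ in nhds 0, memD (simplexPencil s) (X + (-ε) • Y) := by
        have : Filter.Tendsto (fun ε : ℝ => -ε) (nhds 0) (nhds 0) := by
          simpa using (continuous_neg (G := ℝ)).tendsto 0
        exact this.eventually hev
      obtain ⟨δ, hδ, hball⟩ := Metric.eventually_nhds_iff.1 (hev.and hev2)
      obtain ⟨m1, m2⟩ := hball (y := δ / 2) (by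
        rw [Real.dist_eq, sub_zero, abs_of_pos (by positivity)]; linarith)
      have heq := hext m1 m2 ⟨1 / 2, 1 / 2, by norm_num, by norm_num, by norm_num, by
        rw [← smul_add, neg_smul, add_add_add_comm, add_neg_cancel, add_zero, ← two_smul ℝ X,
          smul_smul]
        norm_num⟩
      have hY : Y = 0 := by
        have : (δ / 2) • Y = 0 := by simpa using heq
        exact (smul_eq_zero.1 this).resolve_left (by positivity)
      by_contra hBq
      have hy0 : ∀ j, y j = 0 := by
        intro j
        have : (y j : ℂ) • B q = 0 := congrFun hY j
        exact_mod_cast (smul_eq_zero.1 this).resolve_right hBq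
      have := hy q hq
      simp [hy0] at this
    have hoff : (fun j => (X j 0 1).re) = 0 := by
      refine bdd_zero' s hbdd p _ fun q hq => ?_
      have h1 : ℓ q 0 1 = 0 := by
        have := hBℓ q 0 1
        rw [hzero q hq, Matrix.zero_apply] at this
        exact_mod_cast this.symm
      simpa [ℓ, Matrix.sum_apply] using h1
    have hdiag : (fun j => (X j 0 0).re - (X j 1 1).re) = 0 := by
      refine bdd_zero' s hbdd p _ fun q hq => ?_
      have h1 : ℓ q 0 0 = 0 := by
        have := hBℓ q 0 0
        rw [hzero q hq, Matrix.zero_apply] at this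
        exact_mod_cast this.symm
      have h2 : ℓ q 1 1 = 0 := by
        have := hBℓ q 1 1
        rw [hzero q hq, Matrix.zero_apply] at this
        exact_mod_cast this.symm
      simp [ℓ, Matrix.sum_apply] at h1 h2
      simp only [mul_sub, Finset.sum_sub_distrib]
      linarith
    obtain ⟨j, hj⟩ := hXns
    apply hj
    refine ⟨(X j 0 0).re, ?_⟩
    have o1 : (X j 0 1).re = 0 := congrFun hoff j
    have o2 : (X j 0 0).re - (X j 1 1).re = 0 := congrFun hdiag j
    have o3 : (X j 1 1).re = (X j 0 0).re := by linarith
    ext a b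
    rw [hXre j a b]
    fin_cases a <;> fin_cases b <;> simp [o1, o3, hXsym]
end

section
/- Let C = diag(1,−1), so that D_C is the matrix interval, and let Y ∈ D_C(2) be a Euclidean extreme point of D_C(2) whose imaginary part is nonzero. If (H, Z) is a pair of 2×2 complex Hermitian matrices, not both zero, such that tr(H) = 0 and ker L_C(Y) ⊆ ker Λ_{(I,−C)}(H, Z), then the imaginary part of H is nonzero. -/
open Matrix
open scoped Kronecker ComplexOrder

/-- The matrix `C = diag(1,−1)` defining the matrix interval. -/
noncomputable def Cmat : Matrix (Fin 2) (Fin 2) ℂ := Matrix.diagonal ![1, -1]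

lemma aux_psd (W : Matrix (Fin 2) (Fin 2) ℂ) :
    ((1 : Matrix (Fin 2 × Fin 2) (Fin 2 × Fin 2) ℂ) - Cmat ⊗ₖ W).PosSemidef ↔
      (1 - W).PosSemidef ∧ (1 + W).PosSemidef := by
  constructor
  · intro h
    have h0 := h.submatrix (fun i : Fin 2 => ((0 : Fin 2), i))
    have h1 := h.submatrix (fun i : Fin 2 => ((1 : Fin 2), i))
    constructor
    · convert h0 using 1
      ext i j
      simp [Cmat, Matrix.one_apply]
    · convert h1 using 1
      ext i j
      simp [Cmat, Matrix.one_apply]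
  · rintro ⟨h0, h1⟩
    have e0 : (Matrix.diagonal ![1, 0] : Matrix (Fin 2) (Fin 2) ℂ).PosSemidef := by
      apply Matrix.PosSemidef.diagonal
      intro i; fin_cases i <;> simp
    have e1 : (Matrix.diagonal ![0, 1] : Matrix (Fin 2) (Fin 2) ℂ).PosSemidef := by
      apply Matrix.PosSemidef.diagonal
      intro i; fin_cases i <;> simp
    have := (e0.kronecker h0).add (e1.kronecker h1)
    have e : (1 : Matrix (Fin 2 × Fin 2) (Fin 2 × Fin 2) ℂ) - Cmat ⊗ₖ W =
        (Matrix.diagonal ![1, 0] : Matrix (Fin 2) (Fin 2) ℂ) ⊗ₖ (1 - W) +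
        (Matrix.diagonal ![0, 1] : Matrix (Fin 2) (Fin 2) ℂ) ⊗ₖ (1 + W) := by
      ext ⟨i, i'⟩ ⟨j, j'⟩
      fin_cases i <;> fin_cases j <;> simp [Cmat, Matrix.one_apply]
    rw [e]
    exact this

lemma aux_sq (Y : Matrix (Fin 2) (Fin 2) ℂ)
    (hYeuc : Y ∈ Set.extremePoints ℝ
      {W : Matrix (Fin 2) (Fin 2) ℂ | W.IsHermitian ∧
        ((1 : Matrix (Fin 2 × Fin 2) (Fin 2 × Fin 2) ℂ) - Cmat ⊗ₖ W).PosSemidef}) :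
    Y * Y = 1 := by
  rw [mem_extremePoints] at hYeuc
  obtain ⟨⟨hY, hp⟩, hext⟩ := hYeuc
  rw [aux_psd] at hp
  obtain ⟨hA, hB⟩ := hp
  have half : (0 : ℝ) ≤ 1 / 2 := by norm_num
  have hAA : ((1 - Y) * (1 - Y)).PosSemidef := by
    have := Matrix.posSemidef_conjTranspose_mul_self (1 - Y)
    rwa [hA.isHermitian.eq] at this
  have hBB : ((1 + Y) * (1 + Y)).PosSemidef := by
    have := Matrix.posSemidef_conjTranspose_mul_self (1 + Y)
    rwa [hB.isHermitian.eq] at this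
  have h1 := hB.conjTranspose_mul_mul_same (1 - Y)
  have h2 := hA.conjTranspose_mul_mul_same (1 + Y)
  rw [hA.isHermitian.eq] at h1
  rw [hB.isHermitian.eq] at h2
  have hE : ((1 / 2 : ℝ) • (1 - Y * Y)).PosSemidef := by
    have h3 := ((h1.add h2).smul half).smul half
    convert h3 using 2
    have : (1 - Y) * (1 + Y) * (1 - Y) + (1 + Y) * (1 - Y) * (1 + Y) = (2 : ℝ) • (1 - Y * Y) := by
      rw [two_smul]; noncomm_ring
    rw [this, smul_smul]; norm_num
  have key := @hext (Y + (1 / 2 : ℝ) • (1 - Y * Y)) ?_ (Y - (1 / 2 : ℝ) • (1 - Y * Y)) ?_ ?_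
  · have h4 : (1 / 2 : ℝ) • (1 - Y * Y) = 0 := by
      first
        | simpa using key
        | simpa using key.1
    have h5 : (1 - Y * Y) = 0 := by
      rcases smul_eq_zero.mp h4 with h | h
      · norm_num at h
      · exact h
    exact (sub_eq_zero.mp h5).symm
  · refine ⟨hY.add hE.isHermitian, (aux_psd _).2 ⟨?_, ?_⟩⟩
    · convert hAA.smul half using 1
      have : (1 - Y) * (1 - Y) = (2 : ℝ) • (1 - Y) - (1 - Y * Y) := by
        rw [two_smul]; noncomm_ring
      rw [this]; generalize 1 - Y * Y = E
      rw [smul_sub, smul_smul]; norm_num; abel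
    · convert hB.add hE using 1; abel
  · refine ⟨hY.sub hE.isHermitian, (aux_psd _).2 ⟨?_, ?_⟩⟩
    · convert hA.add hE using 1; abel
    · convert hBB.smul half using 1
      have : (1 + Y) * (1 + Y) = (2 : ℝ) • (1 + Y) - (1 - Y * Y) := by
        rw [two_smul]; noncomm_ring
      rw [this]; generalize 1 - Y * Y = E
      rw [smul_sub, smul_smul]; norm_num; abel
  · refine ⟨1 / 2, 1 / 2, by norm_num, by norm_num, by norm_num, ?_⟩
    rw [← smul_add]
    have : Y + (1 / 2 : ℝ) • (1 - Y * Y) + (Y - (1 / 2 : ℝ) • (1 - Y * Y)) = (2 : ℝ) • Y := by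
      rw [two_smul]; abel
    rw [this, smul_smul]; norm_num

lemma aux_mulVec (A B Y' : Matrix (Fin 2) (Fin 2) ℂ) (v : Fin 2 × Fin 2 → ℂ) (i j : Fin 2) :
    (A ⊗ₖ B - Cmat ⊗ₖ Y').mulVec v (i, j) =
      ∑ k, ∑ l, (A i k * B j l - Cmat i k * Y' j l) * v (k, l) := by
  simp [Matrix.mulVec, dotProduct, Fintype.sum_prod_type]

/-- Let `Y ∈ D_C(2)` be a Euclidean extreme point of the matrix interval at level 2 with
nonzero imaginary part.  If `(H, Z)` is a pair of 2×2 Hermitian matrices, not both zero,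
with `tr(H) = 0` and `ker L_C(Y) ⊆ ker Λ_{(I,−C)}(H, Z)`, then `H` has nonzero imaginary
part. -/
theorem stmt_17 (Y : Matrix (Fin 2) (Fin 2) ℂ)
    (hYeuc : Y ∈ Set.extremePoints ℝ
      {W : Matrix (Fin 2) (Fin 2) ℂ | W.IsHermitian ∧
        ((1 : Matrix (Fin 2 × Fin 2) (Fin 2 × Fin 2) ℂ) - Cmat ⊗ₖ W).PosSemidef})
    (hYim : ∃ p q, (Y p q).im ≠ 0)
    (H Z : Matrix (Fin 2) (Fin 2) ℂ)
    (hH : H.IsHermitian) (hZ : Z.IsHermitian)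
    (hne : ¬ (H = 0 ∧ Z = 0)) (htr : H.trace = 0)
    (hker : ∀ v : Fin 2 × Fin 2 → ℂ,
      ((1 : Matrix (Fin 2 × Fin 2) (Fin 2 × Fin 2) ℂ) - Cmat ⊗ₖ Y).mulVec v = 0 →
        ((1 : Matrix (Fin 2) (Fin 2) ℂ) ⊗ₖ H - Cmat ⊗ₖ Z).mulVec v = 0) :
    ∃ p q, (H p q).im ≠ 0 := by
  have hYY := aux_sq Y hYeuc
  have hYh : Y.IsHermitian := hYeuc.1.1
  have hp : (H - Z) * (1 + Y) = 0 := by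
    ext i j
    have h := hker (fun p => if p.1 = 0 then (1 + Y) p.2 j else 0) (by
      rw [← Matrix.one_kronecker_one]
      have h0 : (1 - Y) * (1 + Y) = 0 := by
        have : (1 - Y) * (1 + Y) = 1 - Y * Y := by noncomm_ring
        rw [this, hYY, sub_self]
      ext ⟨a, b⟩
      have h1 := congrFun (congrFun h0 b) j
      rw [Matrix.mul_apply] at h1
      rw [aux_mulVec]
      obtain rfl | rfl : a = 0 ∨ a = 1 := by fin_cases a <;> simp
      all_goals simp [Cmat] at h1 ⊢
      exact h1)
    have h2 := congrFun h (0, i)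
    rw [aux_mulVec] at h2
    rw [Matrix.mul_apply]
    simpa [Cmat] using h2
  have hm : (H + Z) * (1 - Y) = 0 := by
    ext i j
    have h := hker (fun p => if p.1 = 1 then (1 - Y) p.2 j else 0) (by
      rw [← Matrix.one_kronecker_one]
      have h0 : (1 + Y) * (1 - Y) = 0 := by
        have : (1 + Y) * (1 - Y) = 1 - Y * Y := by noncomm_ring
        rw [this, hYY, sub_self]
      ext ⟨a, b⟩
      have h1 := congrFun (congrFun h0 b) j
      rw [Matrix.mul_apply] at h1
      rw [aux_mulVec]
      obtain rfl | rfl : a = 0 ∨ a = 1 := by fin_cases a <;> simp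
      all_goals simp [Cmat] at h1 ⊢
      exact h1)
    have h2 := congrFun h (1, i)
    rw [aux_mulVec] at h2
    rw [Matrix.mul_apply]
    simpa [Cmat] using h2
  have hZHY : Z = H * Y := by
    have h1 : (2 : ℂ) • (H * Y - Z) = (H - Z) * (1 + Y) - (H + Z) * (1 - Y) := by
      rw [two_smul]; noncomm_ring
    rw [hp, hm, sub_zero] at h1
    rcases smul_eq_zero.mp h1 with h | h
    · norm_num at h
    · exact (sub_eq_zero.mp h).symm
  have hcomm : H * Y = Y * H := by
    have h := hZ.eq
    rw [hZHY, Matrix.conjTranspose_mul, hH.eq, hYh.eq] at h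
    exact h.symm
  by_contra hcon
  push Not at hcon
  have hH10 : H 1 0 = H 0 1 := by
    rw [← hH.apply 1 0]
    exact Complex.conj_eq_iff_im.mpr (hcon 0 1)
  have hYd : ∀ i, (Y i i).im = 0 := fun i => Complex.conj_eq_iff_im.mp (hYh.apply i i)
  have hY10 : star (Y 0 1) = Y 1 0 := hYh.apply 1 0
  have hYim' : (Y 0 1).im ≠ 0 := by
    intro h0
    obtain ⟨p, q, hpq⟩ := hYim
    apply hpq
    fin_cases p <;> fin_cases q
    · exact hYd 0
    · exact h0
    · change (Y 1 0).im = 0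
      rw [← hY10]; simp [h0]
    · exact hYd 1
  have hY01 : Y 0 1 ≠ 0 := fun h => hYim' (by simp [h])
  have hYne : Y 1 0 - Y 0 1 ≠ 0 := by
    intro h
    rw [sub_eq_zero, ← hY10] at h
    exact hYim' (Complex.conj_eq_iff_im.mp h)
  have c00 := congrFun (congrFun hcomm 0) 0
  have c01 := congrFun (congrFun hcomm 0) 1
  simp only [Matrix.mul_apply, Fin.sum_univ_two] at c00 c01
  rw [Matrix.trace_fin_two] at htr
  have z01 : H 0 1 = 0 := by
    have : H 0 1 * (Y 1 0 - Y 0 1) = 0 := by rw [hH10] at c00; linear_combination c00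
    exact (mul_eq_zero.mp this).resolve_right hYne
  have z00 : H 0 0 = 0 := by
    have : Y 0 1 * H 0 0 = 0 := by
      rw [z01] at c01; linear_combination (1/2) * c01 + (1/2) * Y 0 1 * htr
    exact (mul_eq_zero.mp this).resolve_left hY01
  have z11 : H 1 1 = 0 := by rw [z00, zero_add] at htr; exact htr
  have hH0 : H = 0 := by
    ext i j
    fin_cases i <;> fin_cases j
    · exact z00
    · exact z01
    · exact hH10.trans z01
    · exact z11
  exact hne ⟨hH0, by rw [hZHY, hH0, zero_mul]⟩
end
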